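/- arXiv:2212.06957 — 2 statements merged into one kernel-verified Lean document; each statement's English description precedes it below -/
import Mathlib

section
/- For all fixed integers p ≥ 3 and q with 1 ≤ q ≤ (p² − 26p + 55)/4, there exist a constant K > 0 and an integer n₀ ≥ 2 such that for all n ≥ n₀ one has f(n,p,q) ≤ K · n^{(p−2)/(C(p,2)−q+1)} · (log n)^{−1/(C(p,2)−q+1)}, where C(p,2) = p(p−1)/2. -/
namespace EG

/-- The set of (non-diagonal) edges inside a vertex set `S`. -/
def edgesOf {V : Type} [DecidableEq V] (S : Finset V) : Finset (Sym2 V) :=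
  S.sym2.filter fun e => ¬ e.IsDiag

/-- `c` is a `(p,q)`-coloring of `K_n` (with `k` colors): every set of `p` vertices
spans edges of at least `q` distinct colors. -/
def IsPQColoring (n p q k : ℕ) (c : Sym2 (Fin n) → Fin k) : Prop :=
  ∀ S : Finset (Fin n), S.card = p → q ≤ ((edgesOf S).image c).card

/-- The generalized Ramsey number `f(n,p,q)`: the minimum number of colors in a
`(p,q)`-coloring of `K_n`. -/
noncomputable def genRamsey (n p q : ℕ) : ℕ :=
  sInf { k | ∃ c : Sym2 (Fin n) → Fin k, IsPQColoring n p q k c }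

/-- `F²(n;k,s)`: the smallest number `m` of edges such that every simple graph on `n`
vertices with `m` edges contains `k` vertices inducing at least `s` edges. -/
noncomputable def F2 (n k s : ℕ) : ℕ :=
  sInf { m | ∀ E : Finset (Sym2 (Fin n)), (∀ e ∈ E, ¬ e.IsDiag) → E.card = m →
    ∃ S : Finset (Fin n), S.card = k ∧ s ≤ (E ∩ S.sym2).card }

/-- The coloring `c` has a monochromatic clique on the vertex set `S`. -/
def IsMonoClique {n k : ℕ} (c : Sym2 (Fin n) → Fin k) (S : Finset (Fin n)) : Prop :=
  ∃ col : Fin k, ∀ e ∈ edgesOf S, c e = col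

/-- The `k`-color diagonal Ramsey number `R_k(p)`: the least `n` such that every
`k`-coloring of the edges of `K_n` contains a monochromatic `p`-clique. -/
noncomputable def multiRamsey (k p : ℕ) : ℕ :=
  sInf { n | ∀ c : Sym2 (Fin n) → Fin k, ∃ S : Finset (Fin n), S.card = p ∧ IsMonoClique c S }

/-!
Let `P = p - 2` and `d = C(p,2) - q + 1`, and call the number of edges of a vertex set minus the
number of their colors its number of repetitions. A coloring is a `(p,q)`-coloring exactly when
every `p`-set has fewer than `d` repetitions. We take a product of two colorings.

The first coloring uses about `n ^ (P / d - ε)` colors. A counting form of the local lemma gives one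
in which every set of `j ≤ 4 p` vertices has at most `d (j - 2) / P` repetitions, and each edge lies
in few critical sets, the minimal sets attaining this bound. A `p`-set with `d` repetitions contains
a critical set, so the second coloring only has to separate, in each critical set, two edges of the
same first color. Repetitions are supermodular, so critical sets forming a short cycle would have a
union with too many repetitions; as `3 P < d`, the critical sets form a hypergraph on the edges of
`K_n` without Berge cycles of length at most four.

The second coloring uses about `n ^ ε (log n) ^ (-1 / d)` colors, a logarithmic factor fewer than
the local lemma would need. The edges are colored one at a time at random. An uncolored edge carries
a weight for each color, which drops to zero when the color becomes forbidden and is renormalized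
otherwise, so that it is constant on average. Potentials controlling the growth of the weights and
their total mass do not increase on average, because without short cycles a single step affects at
most one factor of each.
-/

open Finset

section Averaging

lemma exists_pos_and_le_of_sum_mul_le {α : Type*} [Fintype α] {P F : α → ℝ} {M : ℝ}
    (hP : ∀ a, 0 ≤ P a) (hP1 : ∑ a, P a = 1) (h : ∑ a, P a * F a ≤ M) :
    ∃ a, 0 < P a ∧ F a ≤ M := by
  by_contra! hlt
  have hle : ∀ a, P a * M ≤ P a * F a := fun a ↦ by
    rcases (hP a).eq_or_lt with h0 | h0
    · simp [← h0]
    · exact mul_le_mul_of_nonneg_left (hlt a h0).le (hP a)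
  obtain ⟨a, ha⟩ : ∃ a, 0 < P a := by
    by_contra! hneg
    linarith [sum_nonpos fun a (_ : a ∈ univ) ↦ hneg a]
  have hM : ∑ a, P a * M < ∑ a, P a * F a :=
    sum_lt_sum (fun a _ ↦ hle a) ⟨a, mem_univ a, mul_lt_mul_of_pos_left (hlt a ha) ha⟩
  rw [← sum_mul, hP1] at hM
  linarith

lemma sum_mul_prod_eq_prod_of_subsingleton {α ι : Type*} [Fintype α] {P : α → ℝ}
    (hP1 : ∑ a, P a = 1) {s : Finset ι} {g : α → ι → ℝ} {h : ι → ℝ}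
    (hmean : ∀ i ∈ s, ∑ a, P a * g a i = h i)
    (hvar : {i | i ∈ s ∧ ∃ a, g a i ≠ h i}.Subsingleton) :
    ∑ a, P a * ∏ i ∈ s, g a i = ∏ i ∈ s, h i := by
  classical
  rcases hvar.eq_empty_or_singleton with hempty | ⟨j, hj⟩
  · have hconst : ∀ a, ∏ i ∈ s, g a i = ∏ i ∈ s, h i := fun a ↦ prod_congr rfl fun i hi ↦ by
      by_contra hne
      exact (hempty ▸ ⟨hi, a, hne⟩ : i ∈ (∅ : Set ι)).elim
    simp only [hconst, ← sum_mul, hP1, one_mul]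
  · have hjs : j ∈ s := (hj ▸ Set.mem_singleton j :
      j ∈ {i | i ∈ s ∧ ∃ a, g a i ≠ h i}).1
    have hconst : ∀ a, ∏ i ∈ s.erase j, g a i = ∏ i ∈ s.erase j, h i := fun a ↦
      prod_congr rfl fun i hi ↦ by
        by_contra hne
        exact ne_of_mem_erase hi (hj ▸ ⟨mem_of_mem_erase hi, a, hne⟩ : i ∈ ({j} : Set ι))
    simp only [← mul_prod_erase s _ hjs, hconst, ← mul_assoc, ← sum_mul, hmean j hjs]

lemma one_add_sum_le_prod_one_add {α : Type*} {s : Finset α} {f : α → ℝ}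
    (hf : ∀ a ∈ s, 0 ≤ f a) : 1 + ∑ a ∈ s, f a ≤ ∏ a ∈ s, (1 + f a) := by
  classical
  induction s using Finset.induction_on with
  | empty => simp
  | insert a s ha ih =>
    rw [sum_insert ha, prod_insert ha]
    have hs := fun b hb ↦ hf b (mem_insert_of_mem hb)
    nlinarith [ih hs, hf a (mem_insert_self a s), sum_nonneg hs]

lemma prod_ite_one_eq_prod_mul_one_add_sum {α : Type*} [Fintype α] {p : α → Prop}
    [DecidablePred p] (hp : ∀ a b, p a → p b → a = b) {G : α → ℝ} (hG : ∀ a, G a ≠ 0) :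
    ∏ a, (if p a then 1 else G a) =
      (∏ a, G a) * (1 + ∑ a, if p a then 1 / G a - 1 else 0) := by
  classical
  by_cases hex : ∃ a, p a
  · obtain ⟨b, hb⟩ := hex
    have hpb : ∀ a, p a ↔ a = b := fun a ↦ ⟨fun ha ↦ hp a b ha hb, fun h ↦ h ▸ hb⟩
    have herase : ∏ a ∈ univ.erase b, (if a = b then 1 else G a) = ∏ a ∈ univ.erase b, G a :=
      prod_congr rfl fun a ha ↦ if_neg (ne_of_mem_erase ha)
    simp only [hpb, sum_ite_eq', mem_univ, if_true]
    rw [← mul_prod_erase univ _ (mem_univ b), ← mul_prod_erase univ G (mem_univ b), herase,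
      if_pos rfl]
    field [hG b]
  · push Not at hex
    simp [hex]

/-- Each outcome `g` replaces at most one factor `G c` by `1`, so the replacements are negatively
correlated. -/
lemma sum_mul_prod_ite_one_le_prod {α β : Type*} [Fintype α] [Fintype β] {P : β → ℝ}
    (hP : ∀ g, 0 ≤ P g) (hP1 : ∑ g, P g = 1) {R : α → β → Prop} [∀ c g, Decidable (R c g)]
    (hR : ∀ c c' g, R c g → R c' g → c = c') {G : α → ℝ} (hG0 : ∀ c, 0 < G c)
    (hG1 : ∀ c, G c ≤ 1) :
    ∑ g, P g * ∏ c, (if R c g then 1 else G c) ≤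
      ∏ c, (G c + (∑ g, if R c g then P g else 0) * (1 - G c)) := by
  set w : α → ℝ := fun c ↦ ∑ g, if R c g then P g else 0
  have hw : ∀ c, 0 ≤ w c := fun c ↦ sum_nonneg fun g _ ↦ by split_ifs; exacts [hP g, le_rfl]
  have hGinv : ∀ c, 0 ≤ 1 / G c - 1 := fun c ↦
    sub_nonneg.2 ((one_le_div (hG0 c)).2 (hG1 c))
  have hmean : ∑ g, P g * ∑ c, (if R c g then 1 / G c - 1 else 0) =
      ∑ c, w c * (1 / G c - 1) := by
    simp only [w, sum_mul, mul_sum]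
    rw [sum_comm]
    refine sum_congr rfl fun c _ ↦ sum_congr rfl fun g _ ↦ ?_
    split_ifs <;> simp
  calc ∑ g, P g * ∏ c, (if R c g then 1 else G c)
      = ∑ g, (∏ c, G c) * (P g + P g * ∑ c, if R c g then 1 / G c - 1 else 0) := by
        refine sum_congr rfl fun g _ ↦ ?_
        rw [prod_ite_one_eq_prod_mul_one_add_sum (fun c c' ↦ hR c c' g) fun c ↦ (hG0 c).ne']
        ring
    _ = (∏ c, G c) * (1 + ∑ c, w c * (1 / G c - 1)) := by
        rw [← mul_sum, sum_add_distrib, hP1, hmean]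
    _ ≤ (∏ c, G c) * ∏ c, (1 + w c * (1 / G c - 1)) :=
        mul_le_mul_of_nonneg_left
          (one_add_sum_le_prod_one_add fun c _ ↦ mul_nonneg (hw c) (hGinv c))
          (prod_nonneg fun c _ ↦ (hG0 c).le)
    _ = ∏ c, (G c + w c * (1 - G c)) := by
        rw [← prod_mul_distrib]
        exact prod_congr rfl fun c _ ↦ by field [(hG0 c).ne']

lemma inv_one_sub_pow_le_one_add {σ : ℕ} {β : ℝ} (hβ : β ≤ 1) (h0 : 0 ≤ σ * β)
    (h4 : σ * β ≤ 1 / 4) : (1 - β)⁻¹ ^ σ ≤ 1 + 4 * σ * β := by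
  have hbernoulli : 1 - σ * β ≤ (1 - β) ^ σ := by
    simpa [← sub_eq_add_neg] using one_add_mul_le_pow (show -2 ≤ -β by linarith) σ
  rw [inv_pow, inv_le_iff_one_le_mul₀ (by linarith)]
  nlinarith

lemma exp_neg_two_mul_le_one_sub {y : ℝ} (h0 : 0 ≤ y) (h2 : y ≤ 1 / 2) :
    Real.exp (-(2 * y)) ≤ 1 - y := by
  rw [Real.exp_neg, inv_le_comm₀ (Real.exp_pos _) (by linarith)]
  refine le_trans ?_ (Real.quadratic_le_exp_of_nonneg (x := 2 * y) (by linarith))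
  rw [inv_le_iff_one_le_mul₀ (by linarith)]
  nlinarith [pow_nonneg h0 3]

end Averaging

section ConflictSystem

/-- The hypergraph `e` is linear and has no Berge cycle of length three or four. -/
structure HasNoShortBergeCycle {V I : Type*} (e : I → Finset V) : Prop where
  linear : ∀ {i j u v}, u ≠ v → u ∈ e i → v ∈ e i → u ∈ e j → v ∈ e j → i = j
  no_triangle : ∀ {i j l x y z}, i ≠ j → j ≠ l → i ≠ l → x ≠ y → y ≠ z → x ≠ z →
    x ∈ e i → x ∈ e j → y ∈ e j → y ∈ e l → z ∈ e l → z ∈ e i → False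
  no_quadrilateral : ∀ {i j l m x y z w}, i ≠ j → i ≠ l → i ≠ m → j ≠ l → j ≠ m → l ≠ m →
    x ≠ y → x ≠ z → x ≠ w → y ≠ z → y ≠ w → z ≠ w →
    x ∈ e i → x ∈ e j → y ∈ e j → y ∈ e l → z ∈ e l → z ∈ e m → w ∈ e m → w ∈ e i → False

/-- A sparse system of coloring constraints: a coloring `b : V → C` has to differ somewhere on
`edge i` from each pattern in `forbidden i`. A pattern is encoded by a function on all of `V`, of
which only the values on `edge i` matter; by `rigid` it is determined by its values on `edge i`
minus any one vertex. -/
structure ConflictSystem (V I C : Type*) where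
  edge : I → Finset V
  forbidden : I → Finset (V → C)
  two_le_card : ∀ i, 2 ≤ (edge i).card
  noShortCycle : HasNoShortBergeCycle edge
  rigid : ∀ i, ∀ f ∈ forbidden i, ∀ f' ∈ forbidden i, ∀ v ∈ edge i,
    (∀ z ∈ edge i, z ≠ v → f z = f' z) → f = f'

/-- A stage of the sequential random coloring: the set of vertices colored so far, their colors,
for each vertex the current weights of the colors (at a colored vertex concentrated on the chosen
color), and the total factor by which renormalization has increased each weight. -/
structure ColoringState (V C : Type*) where
  colored : Finset V
  color : V → C
  weight : V → C → ℝ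
  growth : V → C → ℝ

variable {V I C : Type*}

namespace ColoringState

variable [Fintype C] (st : ColoringState V C)

/-- The total weight of the colors at `v`. -/
def mass (v : V) : ℝ := ∑ c, st.weight v c

/-- The probability with which `v` receives the color `c` if it is colored next. -/
noncomputable def prob (v : V) (c : C) : ℝ := st.weight v c / st.mass v

/-- The potential that bounds the mass of `v` from below. -/
def massPotential (σ : ℕ) (v : V) : ℝ := ∏ c, (1 - σ * st.weight v c)

/-- The initial state, with equal weights. Since no vertex is colored yet, `b` is arbitrary. -/
noncomputable def uniform (b : V → C) : ColoringState V C where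
  colored := ∅
  color := b
  weight _ _ := 1 / Fintype.card C
  growth _ _ := 1

variable {st} {u : V}

lemma massPotential_uniform_le {b : V → C} {σ : ℕ} {v : V} (hσ : (σ : ℝ) ≤ Fintype.card C) :
    (uniform b).massPotential σ v ≤ Real.exp (-σ) := by
  simp only [massPotential, uniform, prod_const, card_univ, mul_one_div]
  exact Real.one_sub_div_pow_le_exp_neg hσ

lemma sum_prob (hmass : 0 < st.mass u) : ∑ c, st.prob u c = 1 := by
  simp only [prob, ← sum_div]
  exact div_self hmass.ne'

lemma prob_nonneg (hw : ∀ v c, 0 ≤ st.weight v c) (c : C) : 0 ≤ st.prob u c :=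
  div_nonneg (hw u c) (sum_nonneg fun c _ ↦ hw u c)

lemma prob_mul_mass (hmass : 0 < st.mass u) (c : C) : st.prob u c * st.mass u = st.weight u c :=
  div_mul_cancel₀ _ hmass.ne'

end ColoringState

namespace ConflictSystem

/-- `u` and `v` lie in the conflict `i`, whose other vertices belong to `D`. -/
def Links (S : ConflictSystem V I C) (D : Finset V) (i : I) (u v : V) : Prop :=
  u ∈ S.edge i ∧ v ∈ S.edge i ∧ ∀ z ∈ S.edge i, z ≠ u → z ≠ v → z ∈ D

/-- Coloring `u` may change the weights of the colors at `z`. -/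
def Affects (S : ConflictSystem V I C) (D : Finset V) (u z : V) : Prop :=
  z = u ∨ (z ∉ D ∧ z ≠ u ∧ ∃ i, S.Links D i u z)

/-- Giving `u` the color `γ` makes the conflict `i` forbid the color `c` at `v`. -/
def Blocks (S : ConflictSystem V I C) (st : ColoringState V C) (i : I) (u : V) (γ : C) (v : V)
    (c : C) : Prop :=
  v ∉ st.colored ∧ v ≠ u ∧ S.Links st.colored i u v ∧
    ∃ f ∈ S.forbidden i, f v = c ∧ f u = γ ∧
      ∀ z ∈ S.edge i, z ≠ u → z ≠ v → st.color z = f z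

variable {S : ConflictSystem V I C} {st : ColoringState V C} {D : Finset V} {i j : I} {u v z z' : V}
  {c c' γ γ' : C}

lemma Blocks.affects (h : S.Blocks st i u γ v c) : S.Affects st.colored u v :=
  Or.inr ⟨h.1, h.2.1, i, h.2.2.1⟩

lemma Blocks.eq_and_eq (h : S.Blocks st i u γ v c) (h' : S.Blocks st j u γ' v c')
    (hor : c = c' ∨ γ = γ') : c = c' ∧ γ = γ' := by
  obtain ⟨-, hvu, ⟨hui, hvi, -⟩, f, hf, rfl, rfl, hfz⟩ := h
  obtain ⟨-, -, ⟨huj, hvj, -⟩, g, hg, rfl, rfl, hgz⟩ := h'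
  obtain rfl := S.noShortCycle.linear hvu hvi hui hvj huj
  have hfg : f = g := by
    rcases hor with hv | hu
    · refine S.rigid i f hf g hg u hui fun z hz hzu ↦ ?_
      by_cases hzv : z = v
      · exact hzv ▸ hv
      · rw [← hfz z hz hzu hzv, hgz z hz hzu hzv]
    · refine S.rigid i f hf g hg v hvi fun z hz hzv ↦ ?_
      by_cases hzu : z = u
      · exact hzu ▸ hu
      · rw [← hfz z hz hzu hzv, hgz z hz hzu hzv]
  exact ⟨congrFun hfg v, congrFun hfg u⟩

lemma Links.ne_of_mem (h : S.Links D j u z) (hvD : v ∉ D) (hvu : v ≠ u) (hzv : z ≠ v)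
    (hvi : v ∈ S.edge i) : j ≠ i := by
  rintro rfl
  exact hvD (h.2.2 v hvi hvu hzv.symm)

lemma not_links_of_mem (hvD : v ∉ D) (hvu : v ≠ u) (hvi : v ∈ S.edge i) (hui : u ∈ S.edge i)
    (hvj : v ∈ S.edge j) (hzj : z ∈ S.edge j) (hzv : z ≠ v) (hzu : z ≠ u) {l : I} :
    ¬ S.Links D l u z := by
  intro hl
  have hli := hl.ne_of_mem hvD hvu hzv hvi
  have hlj := hl.ne_of_mem hvD hvu hzv hvj
  by_cases hij : i = j
  · subst hij
    exact hli (S.noShortCycle.linear hzu.symm hl.1 hl.2.1 hui hzj)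
  · exact S.noShortCycle.no_triangle hij hlj.symm hli.symm hzv.symm hzu hvu hvi hvj hzj
      hl.2.1 hl.1 hui

lemma Links.eq_of_links {l m : I} (hl : S.Links D l u z) (hm : S.Links D m u z')
    (hzu : z ≠ u) (hzu' : z' ≠ u) (hvD : v ∉ D) (hvu : v ≠ u)
    (hvi : v ∈ S.edge i) (hzi : z ∈ S.edge i) (hzv : z ≠ v)
    (hvj : v ∈ S.edge j) (hzj : z' ∈ S.edge j) (hzv' : z' ≠ v) : z = z' := by
  by_contra hzz
  have hli := hl.ne_of_mem hvD hvu hzv hvi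
  have hlj := hl.ne_of_mem hvD hvu hzv hvj
  have hmi := hm.ne_of_mem hvD hvu hzv' hvi
  have hmj := hm.ne_of_mem hvD hvu hzv' hvj
  by_cases hij : i = j
  · subst hij
    by_cases hlm : l = m
    · subst hlm
      exact hli (S.noShortCycle.linear hzz hl.2.1 hm.2.1 hzi hzj)
    · exact S.noShortCycle.no_triangle hli hmi.symm hlm hzz hzu' hzu hl.2.1 hzi hzj hm.2.1
        hm.1 hl.1
  · by_cases hlm : l = m
    · subst hlm
      exact S.noShortCycle.no_triangle hij hlj.symm hli.symm hzv'.symm (Ne.symm hzz) hzv.symm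
        hvi hvj hzj hm.2.1 hl.2.1 hzi
    · exact S.noShortCycle.no_quadrilateral hij hmi.symm hli.symm hmj.symm hlj.symm (Ne.symm hlm)
        hzv'.symm hvu hzv.symm hzu' (Ne.symm hzz) hzu.symm hvi hvj hzj hm.2.1 hm.1 hl.1 hl.2.1 hzi

/-- Two different affected neighbors of `v` would close a Berge cycle of length at most four. -/
lemma Affects.eq_and_eq (hz : S.Affects D u z) (hz' : S.Affects D u z')
    (hvD : v ∉ D) (hvu : v ≠ u) (hvi : v ∈ S.edge i) (hzi : z ∈ S.edge i) (hzv : z ≠ v)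
    (hvj : v ∈ S.edge j) (hzj : z' ∈ S.edge j) (hzv' : z' ≠ v) : i = j ∧ z = z' := by
  suffices hzz : z = z' by
    subst hzz
    exact ⟨S.noShortCycle.linear hzv.symm hvi hzi hvj hzj, rfl⟩
  rcases hz with rfl | ⟨-, hzu, l, hl⟩ <;> rcases hz' with rfl | ⟨-, hzu', m, hm⟩
  · rfl
  · exact (not_links_of_mem hvD hvu hvi hzi hvj hzj hzv' hzu' hm).elim
  · exact (not_links_of_mem hvD hvu hvj hzj hvi hzi hzv hzu hl).elim
  · exact hl.eq_of_links hm hzu hzu' hvD hvu hvi hzi hzv hvj hzj hzv'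

section Extend

variable [Fintype C]

open Classical in
/-- The probability that coloring `u` forbids the color `c` at `v`. -/
noncomputable def blockProb (S : ConflictSystem V I C) (st : ColoringState V C) (u v : V) (c : C) :
    ℝ :=
  ∑ γ, if ∃ i, S.Blocks st i u γ v c then st.prob u γ else 0

open Classical in
/-- The state after giving `u` the color `γ`. A color that becomes forbidden at `v` loses its
weight, and a color that survives has its weight divided by its survival probability, so that
the expected weights do not change. -/
noncomputable def extend [DecidableEq V] (S : ConflictSystem V I C) (st : ColoringState V C) (u : V)
    (γ : C) : ColoringState V C where
  colored := insert u st.colored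
  color := Function.update st.color u γ
  weight v c :=
    if v = u then if c = γ then st.mass u else 0
    else if ∃ i, S.Blocks st i u γ v c then 0 else st.weight v c * (1 - S.blockProb st u v c)⁻¹
  growth v c := st.growth v c * (1 - S.blockProb st u v c)⁻¹

lemma blockProb_eq_zero (h : ∀ i γ, ¬ S.Blocks st i u γ v c) : S.blockProb st u v c = 0 :=
  sum_eq_zero fun γ _ ↦ if_neg fun ⟨i, hi⟩ ↦ h i γ hi

lemma blockProb_eq_prob (h : S.Blocks st i u γ v c) : S.blockProb st u v c = st.prob u γ := by
  rw [blockProb, sum_eq_single γ, if_pos ⟨i, h⟩]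
  · rintro γ' - hne
    exact if_neg fun ⟨j, hj⟩ ↦ hne (hj.eq_and_eq h (Or.inl rfl)).2
  · simp

lemma blockProb_nonneg (hw : ∀ v c, 0 ≤ st.weight v c) : 0 ≤ S.blockProb st u v c :=
  sum_nonneg fun γ _ ↦ by split_ifs; exacts [st.prob_nonneg hw γ, le_rfl]

variable [DecidableEq V]

lemma extend_weight_of_ne_of_not_blocks (hvu : v ≠ u) (h : ∀ i, ¬ S.Blocks st i u γ v c) :
    (S.extend st u γ).weight v c = st.weight v c * (1 - S.blockProb st u v c)⁻¹ := by
  simp [extend, hvu, h]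

lemma extend_weight_of_blocks (h : S.Blocks st i u γ v c) :
    (S.extend st u γ).weight v c = 0 := by
  simp only [extend, if_neg h.2.1, if_pos (⟨i, h⟩ : ∃ i, S.Blocks st i u γ v c)]

lemma extend_weight_self : (S.extend st u γ).weight u γ = st.mass u := by
  simp [extend]

lemma extend_weight_of_not_affects (h : ¬ S.Affects st.colored u v) (c : C) :
    (S.extend st u γ).weight v c = st.weight v c := by
  have hvu : v ≠ u := fun hvu ↦ h (Or.inl hvu)
  have hblocks : ∀ i γ, ¬ S.Blocks st i u γ v c := fun i γ hb ↦ h hb.affects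
  rw [extend_weight_of_ne_of_not_blocks hvu fun i ↦ hblocks i γ, blockProb_eq_zero hblocks]
  simp

lemma extend_weight_nonneg (hw : ∀ v c, 0 ≤ st.weight v c)
    (hblock : ∀ v c, S.blockProb st u v c ≤ 1) (v : V) (c : C) :
    0 ≤ (S.extend st u γ).weight v c := by
  simp only [extend]
  split_ifs
  · exact sum_nonneg fun c _ ↦ hw u c
  · exact le_rfl
  · exact le_rfl
  · exact mul_nonneg (hw v c) (inv_nonneg.2 (sub_nonneg.2 (hblock v c)))

lemma sum_prob_mul_extend_weight (hmass : 0 < st.mass u) (hblock : S.blockProb st u v c < 1) :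
    ∑ γ, st.prob u γ * (S.extend st u γ).weight v c = st.weight v c := by
  classical
  by_cases hv : v = u
  · subst hv
    simp [extend, st.prob_mul_mass hmass]
  · have hterm : ∀ γ, st.prob u γ * (S.extend st u γ).weight v c =
        (st.prob u γ - if ∃ i, S.Blocks st i u γ v c then st.prob u γ else 0) *
          (st.weight v c * (1 - S.blockProb st u v c)⁻¹) := fun γ ↦ by
      simp only [extend, if_neg hv]
      split_ifs <;> ring
    simp only [hterm]
    rw [← sum_mul, sum_sub_distrib, st.sum_prob hmass, ← blockProb]
    field [(sub_pos.2 hblock).ne']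

lemma sum_prob_mul_massPotential_extend_le {σ : ℕ}
    (hmass : 0 < st.mass u) (hw : ∀ v c, 0 ≤ st.weight v c)
    (hblock : ∀ v c, S.blockProb st u v c ≤ 1 / 2) (hvu : v ≠ u)
    (hσw : ∀ c, σ * st.weight v c ≤ 1 / 4) :
    ∑ γ, st.prob u γ * (S.extend st u γ).massPotential σ v ≤ st.massPotential σ v := by
  classical
  have hpos : ∀ c, 0 < 1 - S.blockProb st u v c := fun c ↦ by linarith [hblock v c]
  set G : C → ℝ := fun c ↦ 1 - σ * (st.weight v c * (1 - S.blockProb st u v c)⁻¹) with hG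
  have hG0 : ∀ c, 0 < G c := fun c ↦ by
    simp only [hG]
    rw [← mul_assoc, ← div_eq_mul_inv, sub_pos, div_lt_one (hpos c)]
    linarith [hblock v c, hσw c]
  have hG1 : ∀ c, G c ≤ 1 := fun c ↦ sub_le_self _
    (mul_nonneg σ.cast_nonneg (mul_nonneg (hw v c) (inv_nonneg.2 (hpos c).le)))
  have hprod : ∀ γ, (S.extend st u γ).massPotential σ v =
      ∏ c, if ∃ i, S.Blocks st i u γ v c then 1 else G c := fun γ ↦
    prod_congr rfl fun c _ ↦ by
      simp only [extend, if_neg hvu]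
      split_ifs <;> simp [hG]
  simp only [hprod]
  refine (sum_mul_prod_ite_one_le_prod (st.prob_nonneg hw) (st.sum_prob hmass)
    (fun c c' γ ⟨_, h⟩ ⟨_, h'⟩ ↦ (h.eq_and_eq h' (Or.inr rfl)).1) hG0 hG1).trans_eq ?_
  refine prod_congr rfl fun c _ ↦ ?_
  rw [← blockProb, hG]
  field [(hpos c).ne']

end Extend

section OpenConflicts

variable [DecidableEq V] [Fintype I]

/-- The conflicts at `v` which contain a further vertex outside `D`. -/
def openConflicts (S : ConflictSystem V I C) (D : Finset V) (v : V) : Finset I :=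
  {i | v ∈ S.edge i ∧ ¬ (S.edge i).erase v ⊆ D}

lemma openConflicts_insert_subset :
    S.openConflicts (insert u D) v ⊆ S.openConflicts D v := by
  intro i hi
  simp only [openConflicts, mem_filter, mem_univ, true_and] at hi ⊢
  exact ⟨hi.1, fun h ↦ hi.2 (h.trans (subset_insert u D))⟩

lemma Links.mem_openConflicts (h : S.Links D i u v) (huD : u ∉ D) (hvu : v ≠ u) :
    i ∈ S.openConflicts D v := by
  simp only [openConflicts, mem_filter, mem_univ, true_and]
  exact ⟨h.2.1, fun hsub ↦ huD (hsub (mem_erase.2 ⟨hvu.symm, h.1⟩))⟩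

lemma Links.notMem_openConflicts_insert (h : S.Links D i u v) :
    i ∉ S.openConflicts (insert u D) v := by
  simp only [openConflicts, mem_filter, mem_univ, true_and, not_and_not_right]
  intro _ z hz
  rw [mem_erase] at hz
  by_cases hzu : z = u
  · simp [hzu]
  · exact mem_insert_of_mem (h.2.2 z hz.2 hzu hz.1)

end OpenConflicts

section Potential

variable [DecidableEq V] [DecidableEq C]

/-- The conditional expectation, when `v` has the color `c` and the other vertices are colored
independently with weights `y`, of the number of forbidden patterns of the conflict `i`. -/
def condWeight (S : ConflictSystem V I C) (y : V → C → ℝ) (i : I) (v : V) (c : C) : ℝ :=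
  ∑ f ∈ S.forbidden i with f v = c, ∏ z ∈ (S.edge i).erase v, y z (f z)

/-- The potential that bounds the growth of the weight of the color `c` at `v`. -/
def growthPotential [Fintype I] (S : ConflictSystem V I C) (σ : ℕ) (s : ℝ) (st : ColoringState V C)
    (v : V) (c : C) : ℝ :=
  st.growth v c ^ σ * ∏ i ∈ S.openConflicts st.colored v, (1 + s * S.condWeight st.weight i v c)

lemma condWeight_nonneg {y : V → C → ℝ} (hy : ∀ v c, 0 ≤ y v c) : 0 ≤ S.condWeight y i v c :=
  sum_nonneg fun _ _ ↦ prod_nonneg fun _ _ ↦ hy _ _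

lemma one_le_one_add_mul_condWeight {s : ℝ} (hs : 0 ≤ s) {y : V → C → ℝ}
    (hy : ∀ v c, 0 ≤ y v c) : 1 ≤ 1 + s * S.condWeight y i v c :=
  le_add_of_nonneg_right (mul_nonneg hs (condWeight_nonneg hy))

lemma condWeight_extend_of_forall_not_affects [Fintype C]
    (h : ∀ z ∈ S.edge i, z ≠ v → ¬ S.Affects st.colored u z) :
    S.condWeight (S.extend st u γ).weight i v c = S.condWeight st.weight i v c :=
  sum_congr rfl fun _ _ ↦ prod_congr rfl fun _ hz ↦
    extend_weight_of_not_affects (h _ (mem_of_mem_erase hz) (ne_of_mem_erase hz)) _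

lemma sum_prob_mul_condWeight_extend [Fintype C] (hmass : 0 < st.mass u)
    (hblock : ∀ v c, S.blockProb st u v c < 1) (hvD : v ∉ st.colored) (hvu : v ≠ u)
    (hvi : v ∈ S.edge i) :
    ∑ γ, st.prob u γ * S.condWeight (S.extend st u γ).weight i v c =
      S.condWeight st.weight i v c := by
  simp only [condWeight, mul_sum]
  rw [sum_comm]
  refine sum_congr rfl fun f _ ↦ sum_mul_prod_eq_prod_of_subsingleton (st.sum_prob hmass)
    (fun z _ ↦ sum_prob_mul_extend_weight hmass (hblock z _)) ?_
  rintro z ⟨hz, γ, hzne⟩ z' ⟨hz', γ', hzne'⟩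
  rw [mem_erase] at hz hz'
  have haff := not_imp_comm.1 (fun h ↦ extend_weight_of_not_affects h (f z)) hzne
  have haff' := not_imp_comm.1 (fun h ↦ extend_weight_of_not_affects h (f z')) hzne'
  exact (haff.eq_and_eq haff' hvD hvu hvi hz.2 hz.1 hvi hz'.2 hz'.1).2

variable [Fintype I]

lemma pow_growth_le_growthPotential {σ : ℕ} {s : ℝ} (hs : 0 ≤ s)
    (hw : ∀ v c, 0 ≤ st.weight v c) (hg : 0 ≤ st.growth v c) :
    st.growth v c ^ σ ≤ S.growthPotential σ s st v c :=
  le_mul_of_one_le_right (pow_nonneg hg σ)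
    (one_le_prod fun _ _ ↦ one_le_one_add_mul_condWeight hs hw)

lemma growthPotential_uniform_le [Fintype C] {b : V → C} {σ : ℕ} {s lam : ℝ} (hs : 0 ≤ s)
    (hlam : ∑ i with v ∈ S.edge i, S.condWeight (fun _ _ ↦ 1 / Fintype.card C) i v c ≤ lam) :
    S.growthPotential σ s (.uniform b) v c ≤ Real.exp (s * lam) := by
  have hnonneg : ∀ i, 0 ≤ S.condWeight (fun _ _ ↦ 1 / (Fintype.card C : ℝ)) i v c := fun i ↦
    condWeight_nonneg fun _ _ ↦ by positivity
  simp only [growthPotential, ColoringState.uniform, one_pow, one_mul]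
  refine (Real.prod_one_add_le_exp_sum _ fun i ↦ mul_nonneg hs (hnonneg i)).trans ?_
  rw [Real.exp_le_exp, ← mul_sum]
  refine mul_le_mul_of_nonneg_left (le_trans ?_ hlam) hs
  exact sum_le_sum_of_subset_of_nonneg (monotone_filter_right _ fun i _ hi ↦ hi.1)
    fun i _ _ ↦ hnonneg i

lemma sum_prob_mul_prod_openConflicts [Fintype C] (hmass : 0 < st.mass u)
    (hblock : ∀ v c, S.blockProb st u v c < 1) (hvD : v ∉ st.colored) (hvu : v ≠ u) (s : ℝ) :
    ∑ γ, st.prob u γ * ∏ i ∈ S.openConflicts (insert u st.colored) v,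
        (1 + s * S.condWeight (S.extend st u γ).weight i v c) =
      ∏ i ∈ S.openConflicts (insert u st.colored) v, (1 + s * S.condWeight st.weight i v c) := by
  have hmem : ∀ {i}, i ∈ S.openConflicts (insert u st.colored) v → v ∈ S.edge i := fun hi ↦
    (mem_filter.1 hi).2.1
  have haff : ∀ {i γ}, 1 + s * S.condWeight (S.extend st u γ).weight i v c ≠
      1 + s * S.condWeight st.weight i v c → ∃ z ∈ S.edge i, z ≠ v ∧ S.Affects st.colored u z := by
    intro i γ hne
    by_contra! hnone
    exact hne (by rw [condWeight_extend_of_forall_not_affects hnone])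
  refine sum_mul_prod_eq_prod_of_subsingleton (st.sum_prob hmass) (fun i hi ↦ ?_) ?_
  · simp only [mul_add, mul_one, mul_left_comm _ s, sum_add_distrib, st.sum_prob hmass, ← mul_sum,
      sum_prob_mul_condWeight_extend hmass hblock hvD hvu (hmem hi)]
  · rintro i ⟨hi, γ, hγ⟩ j ⟨hj, γ', hγ'⟩
    obtain ⟨z, hzi, hzv, hz⟩ := haff hγ
    obtain ⟨z', hzj, hzv', hz'⟩ := haff hγ'
    exact (hz.eq_and_eq hz' hvD hvu (hmem hi) hzi hzv (hmem hj) hzj hzv').1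

/-- The factor of the conflict that leaves the product pays for the renormalization. -/
lemma inv_one_sub_blockProb_pow_mul_prod_le [Fintype C] {σ : ℕ} {κ : ℝ} (hκ : 0 ≤ κ)
    (hw : ∀ v c, 0 ≤ st.weight v c) (huD : u ∉ st.colored)
    (hblock : S.blockProb st u v c ≤ 1) (hblockσ : σ * S.blockProb st u v c ≤ 1 / 4)
    (hprob : ∀ i γ, S.Blocks st i u γ v c →
      st.prob u γ ≤ κ * S.condWeight st.weight i v c) :
    (1 - S.blockProb st u v c)⁻¹ ^ σ *
        ∏ i ∈ S.openConflicts (insert u st.colored) v,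
          (1 + 4 * σ * κ * S.condWeight st.weight i v c) ≤
      ∏ i ∈ S.openConflicts st.colored v, (1 + 4 * σ * κ * S.condWeight st.weight i v c) := by
  classical
  have hone : ∀ i, 1 ≤ 1 + 4 * σ * κ * S.condWeight st.weight i v c := fun i ↦
    one_le_one_add_mul_condWeight (by positivity) hw
  have hnonneg := fun i ↦ zero_le_one.trans (hone i)
  by_cases hex : ∃ i γ, S.Blocks st i u γ v c
  · obtain ⟨i, γ, hi⟩ := hex
    have hmem := hi.2.2.1.mem_openConflicts huD hi.2.1
    have hfactor : (1 - S.blockProb st u v c)⁻¹ ^ σ ≤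
        1 + 4 * σ * κ * S.condWeight st.weight i v c := by
      refine (inv_one_sub_pow_le_one_add hblock
        (mul_nonneg σ.cast_nonneg (blockProb_nonneg hw)) hblockσ).trans ?_
      rw [blockProb_eq_prob hi, mul_assoc (4 * σ : ℝ)]
      gcongr
      exact hprob i γ hi
    rw [← mul_prod_erase _ _ hmem]
    refine mul_le_mul hfactor (prod_le_prod_of_subset_of_one_le (fun j hj ↦ mem_erase.2
      ⟨?_, openConflicts_insert_subset hj⟩) (fun j _ ↦ hnonneg j) fun j _ _ ↦ hone j)
      (prod_nonneg fun j _ ↦ hnonneg j) (hnonneg i)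
    rintro rfl
    exact hi.2.2.1.notMem_openConflicts_insert hj
  · push Not at hex
    rw [blockProb_eq_zero hex, sub_zero, inv_one, one_pow, one_mul]
    exact prod_le_prod_of_subset_of_one_le openConflicts_insert_subset (fun j _ ↦ hnonneg j)
      fun j _ _ ↦ hone j

lemma sum_prob_mul_growthPotential_extend_le [Fintype C] {σ : ℕ} {κ : ℝ} (hκ : 0 ≤ κ)
    (hmass : 0 < st.mass u) (hw : ∀ v c, 0 ≤ st.weight v c)
    (hblock : ∀ v c, S.blockProb st u v c < 1) (huD : u ∉ st.colored)
    (hvD : v ∉ st.colored) (hvu : v ≠ u) (hg : 0 ≤ st.growth v c)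
    (hblockσ : σ * S.blockProb st u v c ≤ 1 / 4)
    (hprob : ∀ i γ, S.Blocks st i u γ v c →
      st.prob u γ ≤ κ * S.condWeight st.weight i v c) :
    ∑ γ, st.prob u γ * S.growthPotential σ (4 * σ * κ) (S.extend st u γ) v c ≤
      S.growthPotential σ (4 * σ * κ) st v c := by
  have hgrowth : ∀ γ, S.growthPotential σ (4 * σ * κ) (S.extend st u γ) v c =
      (st.growth v c * (1 - S.blockProb st u v c)⁻¹) ^ σ *
        ∏ i ∈ S.openConflicts (insert u st.colored) v,
          (1 + 4 * σ * κ * S.condWeight (S.extend st u γ).weight i v c) := fun _ ↦ rfl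
  simp only [hgrowth, mul_left_comm (st.prob u _), ← mul_sum]
  rw [sum_prob_mul_prod_openConflicts hmass hblock hvD hvu, mul_pow, mul_assoc]
  exact mul_le_mul_of_nonneg_left
    (inv_one_sub_blockProb_pow_mul_prod_le hκ hw huD (hblock v c).le hblockσ hprob)
    (pow_nonneg hg σ)

end Potential

end ConflictSystem
end ConflictSystem

section SequentialColoring

/-- The numerical parameters of the potential function, when there are `B` colors: the bound `k` on
the size of the conflicts, the exponent `σ`, the coefficients `θ` and `θ'` of the growth and mass
potentials, and the bound `ζ` for the growth. -/
structure PotentialParams (B : ℕ) where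
  k : ℕ
  σ : ℕ
  θ : ℝ
  θ' : ℝ
  ζ : ℝ
  σ_pos : 0 < σ
  θ_pos : 0 < θ
  θ'_pos : 0 < θ'
  one_le_ζ : 1 ≤ ζ
  σ_mul_ζ_le : 16 * σ * ζ ≤ B
  inv_θ_le : θ⁻¹ ≤ ζ ^ σ
  inv_θ'_le : θ'⁻¹ ≤ Real.exp (-(σ / 2))

lemma PotentialParams.cast_pos {B : ℕ} (p : PotentialParams B) : (0 : ℝ) < B := by
  have := p.σ_pos
  have := p.one_le_ζ
  exact lt_of_lt_of_le (by positivity) p.σ_mul_ζ_le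

namespace ConflictSystem

variable {V I C : Type*} [DecidableEq V] [Fintype I] [Fintype C] [DecidableEq C]

/-- The combined potential of the uncolored vertex `v`. -/
def vertexPotential {B : ℕ} (S : ConflictSystem V I C) (p : PotentialParams B)
    (st : ColoringState V C) (v : V) : ℝ :=
  ∑ c, p.θ * S.growthPotential p.σ (4 * p.σ * 4 ^ p.k) st v c + p.θ' * st.massPotential p.σ v

variable [Fintype V]

/-- The properties maintained while the vertices are colored one at a time. -/
structure Invariant (S : ConflictSystem V I C) (p : PotentialParams (Fintype.card C))
    (st : ColoringState V C) : Prop where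
  weight_nonneg : ∀ v c, 0 ≤ st.weight v c
  one_le_growth : ∀ v c, 1 ≤ st.growth v c
  growth_le : ∀ v ∉ st.colored, ∀ c, st.growth v c ≤ 2 * p.ζ
  weight_le : ∀ v ∉ st.colored, ∀ c, st.weight v c ≤ st.growth v c / Fintype.card C
  le_weight_color : ∀ v ∈ st.colored, 1 / 4 ≤ st.weight v (st.color v)
  exists_ne : ∀ i, S.edge i ⊆ st.colored → ∀ f ∈ S.forbidden i, ∃ z ∈ S.edge i, st.color z ≠ f z
  weight_eq_zero : ∀ v ∉ st.colored, ∀ i, v ∈ S.edge i → (S.edge i).erase v ⊆ st.colored →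
    ∀ f ∈ S.forbidden i, (∀ z ∈ S.edge i, z ≠ v → st.color z = f z) → st.weight v (f v) = 0
  sum_vertexPotential_le : ∑ v ∈ st.coloredᶜ, S.vertexPotential p st v ≤ 1

namespace Invariant

variable {S : ConflictSystem V I C} {p : PotentialParams (Fintype.card C)}
  {st : ColoringState V C} (H : S.Invariant p st) {i : I} {u v : V} {c γ : C}

include H

lemma growth_nonneg (v : V) (c : C) : 0 ≤ st.growth v c := zero_le_one.trans (H.one_le_growth v c)

lemma σ_mul_weight_le (hv : v ∉ st.colored) (c : C) : p.σ * st.weight v c ≤ 1 / 8 := by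
  have hB := p.cast_pos
  calc p.σ * st.weight v c ≤ p.σ * (2 * p.ζ / Fintype.card C) := by
        gcongr
        exact (H.weight_le v hv c).trans (by gcongr; exact H.growth_le v hv c)
    _ = 16 * p.σ * p.ζ / Fintype.card C / 8 := by ring
    _ ≤ 1 / 8 := by
        gcongr
        exact (div_le_one hB).2 p.σ_mul_ζ_le

lemma massPotential_nonneg (hv : v ∉ st.colored) : 0 ≤ st.massPotential p.σ v :=
  prod_nonneg fun c _ ↦ by linarith [H.σ_mul_weight_le hv c]

lemma growthPotential_nonneg (v : V) (c : C) :
    0 ≤ S.growthPotential p.σ (4 * p.σ * 4 ^ p.k) st v c :=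
  (pow_nonneg (H.growth_nonneg v c) _).trans
    (pow_growth_le_growthPotential (by positivity) H.weight_nonneg (H.growth_nonneg v c))

lemma vertexPotential_nonneg (hv : v ∉ st.colored) : 0 ≤ S.vertexPotential p st v :=
  add_nonneg (sum_nonneg fun c _ ↦ mul_nonneg p.θ_pos.le (H.growthPotential_nonneg v c))
    (mul_nonneg p.θ'_pos.le (H.massPotential_nonneg hv))

lemma vertexPotential_le_one (hv : v ∉ st.colored) : S.vertexPotential p st v ≤ 1 :=
  (single_le_sum (fun _ hw ↦ H.vertexPotential_nonneg (mem_compl.1 hw)) (mem_compl.2 hv)).trans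
    H.sum_vertexPotential_le

lemma growth_le_ζ (hv : v ∉ st.colored) (c : C) : st.growth v c ≤ p.ζ := by
  have hterm : p.θ * S.growthPotential p.σ (4 * p.σ * 4 ^ p.k) st v c ≤ 1 :=
    calc p.θ * S.growthPotential p.σ (4 * p.σ * 4 ^ p.k) st v c
        ≤ ∑ c, p.θ * S.growthPotential p.σ (4 * p.σ * 4 ^ p.k) st v c :=
          single_le_sum (f := fun c ↦ p.θ * S.growthPotential p.σ (4 * p.σ * 4 ^ p.k) st v c)
            (fun c _ ↦ mul_nonneg p.θ_pos.le (H.growthPotential_nonneg v c)) (mem_univ c)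
      _ ≤ S.vertexPotential p st v :=
          le_add_of_nonneg_right (mul_nonneg p.θ'_pos.le (H.massPotential_nonneg hv))
      _ ≤ 1 := H.vertexPotential_le_one hv
  have hpow : st.growth v c ^ p.σ ≤ p.ζ ^ p.σ :=
    calc st.growth v c ^ p.σ ≤ S.growthPotential p.σ (4 * p.σ * 4 ^ p.k) st v c :=
          pow_growth_le_growthPotential (by positivity) H.weight_nonneg (H.growth_nonneg v c)
      _ ≤ p.θ⁻¹ := by rwa [← one_div, le_div_iff₀' p.θ_pos]
      _ ≤ p.ζ ^ p.σ := p.inv_θ_le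
  exact le_of_pow_le_pow_left₀ p.σ_pos.ne' (zero_le_one.trans p.one_le_ζ) hpow

lemma quarter_le_mass (hu : u ∉ st.colored) : 1 / 4 ≤ st.mass u := by
  have hterm : p.θ' * st.massPotential p.σ u ≤ 1 :=
    (le_add_of_nonneg_left (sum_nonneg fun c _ ↦ mul_nonneg p.θ_pos.le
      (H.growthPotential_nonneg u c))).trans (H.vertexPotential_le_one hu)
  have hexp : Real.exp (-(2 * (p.σ * st.mass u))) ≤ Real.exp (-(p.σ / 2)) :=
    calc Real.exp (-(2 * (p.σ * st.mass u)))
        = ∏ c, Real.exp (-(2 * (p.σ * st.weight u c))) := by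
          rw [← Real.exp_sum, sum_neg_distrib, ← mul_sum, ← mul_sum, ColoringState.mass]
      _ ≤ st.massPotential p.σ u := prod_le_prod (fun _ _ ↦ (Real.exp_pos _).le) fun c _ ↦
          exp_neg_two_mul_le_one_sub (mul_nonneg p.σ.cast_nonneg (H.weight_nonneg u c))
            (by linarith [H.σ_mul_weight_le hu c])
      _ ≤ p.θ'⁻¹ := by rwa [← one_div, le_div_iff₀' p.θ'_pos]
      _ ≤ Real.exp (-(p.σ / 2)) := p.inv_θ'_le
  have hσ : (0 : ℝ) < p.σ := by exact_mod_cast p.σ_pos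
  nlinarith [Real.exp_le_exp.1 hexp]

lemma mass_pos (hu : u ∉ st.colored) : 0 < st.mass u := by linarith [H.quarter_le_mass hu]

lemma prob_le (hu : u ∉ st.colored) (γ : C) : st.prob u γ ≤ 4 * st.weight u γ := by
  rw [ColoringState.prob, div_le_iff₀ (H.mass_pos hu)]
  nlinarith [H.weight_nonneg u γ, H.quarter_le_mass hu]

lemma σ_mul_prob_le (hu : u ∉ st.colored) (γ : C) : p.σ * st.prob u γ ≤ 1 / 4 := by
  have hB := p.cast_pos
  calc p.σ * st.prob u γ ≤ p.σ * (4 * (p.ζ / Fintype.card C)) := by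
        gcongr
        refine (H.prob_le hu γ).trans ?_
        gcongr
        exact (H.weight_le u hu γ).trans (by gcongr; exact H.growth_le_ζ hu γ)
    _ = 16 * p.σ * p.ζ / Fintype.card C / 4 := by ring
    _ ≤ 1 / 4 := by
        gcongr
        exact (div_le_one hB).2 p.σ_mul_ζ_le

lemma σ_mul_blockProb_le (hu : u ∉ st.colored) (v : V) (c : C) :
    p.σ * S.blockProb st u v c ≤ 1 / 4 := by
  by_cases hex : ∃ i γ, S.Blocks st i u γ v c
  · obtain ⟨i, γ, h⟩ := hex
    exact blockProb_eq_prob h ▸ H.σ_mul_prob_le hu γ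
  · push Not at hex
    norm_num [blockProb_eq_zero hex]

lemma blockProb_le_half (hu : u ∉ st.colored) (v : V) (c : C) : S.blockProb st u v c ≤ 1 / 2 := by
  have hσ : (1 : ℝ) ≤ p.σ := by exact_mod_cast p.σ_pos
  nlinarith [H.σ_mul_blockProb_le hu v c, S.blockProb_nonneg (u := u) (v := v) (c := c)
    H.weight_nonneg]

lemma inv_one_sub_blockProb_le_two (hu : u ∉ st.colored) (v : V) (c : C) :
    (1 - S.blockProb st u v c)⁻¹ ≤ 2 := by
  have hhalf := H.blockProb_le_half hu v c
  rw [inv_le_comm₀ (by linarith) two_pos]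
  linarith

lemma one_le_inv_one_sub_blockProb (hu : u ∉ st.colored) (v : V) (c : C) :
    1 ≤ (1 - S.blockProb st u v c)⁻¹ := by
  have hhalf := H.blockProb_le_half hu v c
  rw [one_le_inv₀ (by linarith)]
  linarith [S.blockProb_nonneg (u := u) (v := v) (c := c) H.weight_nonneg]

lemma prob_le_of_blocks (hk : ∀ i, (S.edge i).card ≤ p.k) (hu : u ∉ st.colored)
    (h : S.Blocks st i u γ v c) : st.prob u γ ≤ 4 ^ p.k * S.condWeight st.weight i v c := by
  obtain ⟨-, hvu, ⟨hui, hvi, hD⟩, f, hf, rfl, rfl, hcolor⟩ := h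
  have huv : u ∈ (S.edge i).erase v := mem_erase.2 ⟨hvu.symm, hui⟩
  set T := ((S.edge i).erase v).erase u
  have hweight : ∏ z ∈ (S.edge i).erase v, st.weight z (f z) ≤ S.condWeight st.weight i v (f v) :=
    single_le_sum (f := fun f : V → C ↦ ∏ z ∈ (S.edge i).erase v, st.weight z (f z))
      (fun f _ ↦ prod_nonneg fun z _ ↦ H.weight_nonneg z (f z)) (by simp [hf])
  have hcolored : (1 / 4 : ℝ) ^ T.card ≤ ∏ z ∈ T, st.weight z (f z) := by
    rw [← prod_const]
    refine prod_le_prod (fun _ _ ↦ by norm_num) fun z hz ↦ ?_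
    simp only [T, mem_erase] at hz
    rw [← hcolor z hz.2.2 hz.1 hz.2.1]
    exact H.le_weight_color z (hD z hz.2.2 hz.1 hz.2.1)
  have hcard : T.card + 1 ≤ p.k := by
    have := hk i
    have := S.two_le_card i
    rw [card_erase_of_mem huv, card_erase_of_mem hvi]
    omega
  have hfour : (4 : ℝ) ≤ 4 ^ p.k * (1 / 4) ^ T.card := by
    rw [one_div, inv_pow, ← div_eq_mul_inv, le_div_iff₀ (by positivity), ← pow_succ']
    exact pow_le_pow_right₀ (by norm_num) hcard
  have hwu := H.weight_nonneg u (f u)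
  calc st.prob u (f u) ≤ 4 * st.weight u (f u) := H.prob_le hu _
    _ ≤ 4 ^ p.k * (∏ z ∈ T, st.weight z (f z)) * st.weight u (f u) := by
        gcongr
        exact hfour.trans (by gcongr)
    _ = 4 ^ p.k * ∏ z ∈ (S.edge i).erase v, st.weight z (f z) := by
        rw [← mul_prod_erase _ _ huv]
        ring
    _ ≤ 4 ^ p.k * S.condWeight st.weight i v (f v) := by gcongr

lemma sum_prob_mul_vertexPotential_extend_le (hk : ∀ i, (S.edge i).card ≤ p.k)
    (hu : u ∉ st.colored) (hv : v ∉ st.colored) (hvu : v ≠ u) :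
    ∑ γ, st.prob u γ * S.vertexPotential p (S.extend st u γ) v ≤ S.vertexPotential p st v := by
  have hlin : ∑ γ, st.prob u γ * S.vertexPotential p (S.extend st u γ) v =
      ∑ c, p.θ * ∑ γ, st.prob u γ *
          S.growthPotential p.σ (4 * p.σ * 4 ^ p.k) (S.extend st u γ) v c +
        p.θ' * ∑ γ, st.prob u γ * (S.extend st u γ).massPotential p.σ v := by
    simp only [vertexPotential, mul_add, sum_add_distrib, mul_sum, mul_left_comm (st.prob u _)]
    rw [sum_comm]
  have := p.θ_pos
  have := p.θ'_pos
  rw [hlin, vertexPotential]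
  gcongr with c
  · exact sum_prob_mul_growthPotential_extend_le (by positivity) (H.mass_pos hu) H.weight_nonneg
      (fun v c ↦ by linarith [H.blockProb_le_half hu v c]) hu hv hvu (H.growth_nonneg v c)
      (H.σ_mul_blockProb_le hu v c) fun i γ h ↦ H.prob_le_of_blocks hk hu h
  · exact sum_prob_mul_massPotential_extend_le (H.mass_pos hu) H.weight_nonneg
      (H.blockProb_le_half hu) hvu fun c ↦ by linarith [H.σ_mul_weight_le hv c]

lemma sum_prob_mul_sum_vertexPotential_extend_le (hk : ∀ i, (S.edge i).card ≤ p.k)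
    (hu : u ∉ st.colored) :
    ∑ γ, st.prob u γ *
      ∑ v ∈ (insert u st.colored)ᶜ, S.vertexPotential p (S.extend st u γ) v ≤ 1 := by
  simp only [mul_sum]
  rw [sum_comm]
  calc ∑ v ∈ (insert u st.colored)ᶜ, ∑ γ, st.prob u γ * S.vertexPotential p (S.extend st u γ) v
      ≤ ∑ v ∈ (insert u st.colored)ᶜ, S.vertexPotential p st v := sum_le_sum fun v hv ↦ by
        simp only [mem_compl, mem_insert, not_or] at hv
        exact H.sum_prob_mul_vertexPotential_extend_le hk hu hv.2 hv.1
    _ ≤ ∑ v ∈ st.coloredᶜ, S.vertexPotential p st v :=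
        sum_le_sum_of_subset_of_nonneg (compl_subset_compl.2 (subset_insert u _))
          fun v hv _ ↦ H.vertexPotential_nonneg (mem_compl.1 hv)
    _ ≤ 1 := H.sum_vertexPotential_le

lemma exists_extend_color_ne (hu : u ∉ st.colored) (hγ : 0 < st.prob u γ) (i : I)
    (hi : S.edge i ⊆ insert u st.colored) (f : V → C) (hf : f ∈ S.forbidden i) :
    ∃ z ∈ S.edge i, (S.extend st u γ).color z ≠ f z := by
  simp only [extend]
  by_cases hui : u ∈ S.edge i
  · by_contra! hcon
    have hfu : f u = γ := by simpa using (hcon u hui).symm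
    have hzero : st.weight u (f u) = 0 := by
      refine H.weight_eq_zero u hu i hui (fun z hz ↦ ?_) f hf fun z hz hzu ↦ ?_
      · exact mem_of_mem_insert_of_ne (hi (mem_of_mem_erase hz)) (ne_of_mem_erase hz)
      · rw [← hcon z hz, Function.update_of_ne hzu]
    simp [ColoringState.prob, ← hfu, hzero] at hγ
  · have hne : ∀ z ∈ S.edge i, z ≠ u := fun z hz ↦ ne_of_mem_of_not_mem hz hui
    obtain ⟨z, hz, hfz⟩ := H.exists_ne i
      (fun z hz ↦ mem_of_mem_insert_of_ne (hi hz) (hne z hz)) f hf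
    exact ⟨z, hz, by rwa [Function.update_of_ne (hne z hz)]⟩

lemma extend_weight_eq_zero (hv : v ∉ insert u st.colored) (i : I)
    (hvi : v ∈ S.edge i) (hi : (S.edge i).erase v ⊆ insert u st.colored) (f : V → C)
    (hf : f ∈ S.forbidden i)
    (hcolor : ∀ z ∈ S.edge i, z ≠ v → (S.extend st u γ).color z = f z) :
    (S.extend st u γ).weight v (f v) = 0 := by
  simp only [extend] at hcolor
  rw [mem_insert, not_or] at hv
  by_cases hui : u ∈ S.edge i
  · refine extend_weight_of_blocks (i := i) ⟨hv.2, hv.1, ⟨hui, hvi, fun z hz hzu hzv ↦ ?_⟩, f, hf,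
      rfl, ?_, fun z hz hzu hzv ↦ ?_⟩
    · exact mem_of_mem_insert_of_ne (hi (mem_erase.2 ⟨hzv, hz⟩)) hzu
    · simpa using (hcolor u hui (Ne.symm hv.1)).symm
    · rw [← hcolor z hz hzv, Function.update_of_ne hzu]
  · have hne : ∀ z ∈ S.edge i, z ≠ u := fun z hz ↦ ne_of_mem_of_not_mem hz hui
    have hzero : st.weight v (f v) = 0 := by
      refine H.weight_eq_zero v hv.2 i hvi (fun z hz ↦ ?_) f hf fun z hz hzv ↦ ?_
      · exact mem_of_mem_insert_of_ne (hi hz) (hne z (mem_of_mem_erase hz))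
      · rw [← hcolor z hz hzv, Function.update_of_ne (hne z hz)]
    simp [extend, hv.1, hzero]

lemma extend_weight_le (hu : u ∉ st.colored) (hv : v ∉ insert u st.colored) (c : C) :
    (S.extend st u γ).weight v c ≤ (S.extend st u γ).growth v c / Fintype.card C := by
  rw [mem_insert, not_or] at hv
  have hinv := zero_le_one.trans (H.one_le_inv_one_sub_blockProb hu v c)
  simp only [extend, if_neg hv.1]
  split_ifs
  · exact div_nonneg (mul_nonneg (H.growth_nonneg v c) hinv) (Nat.cast_nonneg _)
  · rw [mul_div_right_comm]
    exact mul_le_mul_of_nonneg_right (H.weight_le v hv.2 c) hinv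

lemma le_extend_weight_color (hu : u ∉ st.colored) (hv : v ∈ insert u st.colored) :
    1 / 4 ≤ (S.extend st u γ).weight v ((S.extend st u γ).color v) := by
  have hcolor : (S.extend st u γ).color = Function.update st.color u γ := rfl
  by_cases hvu : v = u
  · subst hvu
    rw [hcolor, Function.update_self, extend_weight_self]
    exact H.quarter_le_mass hu
  · have hvD := mem_of_mem_insert_of_ne hv hvu
    rw [hcolor, Function.update_of_ne hvu, extend_weight_of_not_affects]
    · exact H.le_weight_color v hvD
    · rintro (h | h)
      exacts [hvu h, h.1 hvD]

lemma extend (hu : u ∉ st.colored) (hγ : 0 < st.prob u γ)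
    (hpot : ∑ v ∈ (insert u st.colored)ᶜ, S.vertexPotential p (S.extend st u γ) v ≤ 1) :
    S.Invariant p (S.extend st u γ) where
  weight_nonneg := extend_weight_nonneg H.weight_nonneg fun v c ↦ by
    linarith [H.blockProb_le_half hu v c]
  one_le_growth v c := one_le_mul_of_one_le_of_one_le (H.one_le_growth v c)
    (H.one_le_inv_one_sub_blockProb hu v c)
  growth_le v hv c := by
    have hvD : v ∉ st.colored := fun h ↦ hv (mem_insert_of_mem h)
    rw [mul_comm]
    exact mul_le_mul (H.growth_le_ζ hvD c) (H.inv_one_sub_blockProb_le_two hu v c)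
      (zero_le_one.trans (H.one_le_inv_one_sub_blockProb hu v c))
      (zero_le_one.trans p.one_le_ζ)
  weight_le _ hv c := H.extend_weight_le hu hv c
  le_weight_color _ hv := H.le_extend_weight_color hu hv
  exists_ne := H.exists_extend_color_ne hu hγ
  weight_eq_zero _ hv := H.extend_weight_eq_zero hv
  sum_vertexPotential_le := hpot

lemma exists_extend (hk : ∀ i, (S.edge i).card ≤ p.k) (hu : u ∉ st.colored) :
    ∃ γ, S.Invariant p (S.extend st u γ) := by
  obtain ⟨γ, hγ, hpot⟩ := exists_pos_and_le_of_sum_mul_le (st.prob_nonneg H.weight_nonneg)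
    (st.sum_prob (H.mass_pos hu)) (H.sum_prob_mul_sum_vertexPotential_extend_le hk hu)
  exact ⟨γ, H.extend hu hγ hpot⟩

end Invariant

lemma Invariant.uniform {S : ConflictSystem V I C}
    {p : PotentialParams (Fintype.card C)} {lam : ℝ} (b : V → C)
    (hlam : ∀ v c, ∑ i with v ∈ S.edge i,
      S.condWeight (fun _ _ ↦ 1 / (Fintype.card C : ℝ)) i v c ≤ lam)
    (hpot : Fintype.card V * (Fintype.card C * (p.θ * Real.exp (4 * p.σ * 4 ^ p.k * lam)) +
      p.θ' * Real.exp (-p.σ)) ≤ 1) :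
    S.Invariant p (.uniform b) where
  weight_nonneg _ _ := one_div_nonneg.2 (Nat.cast_nonneg _)
  one_le_growth _ _ := le_rfl
  growth_le _ _ _ := show 1 ≤ 2 * p.ζ by linarith [p.one_le_ζ]
  weight_le _ _ _ := le_rfl
  le_weight_color _ hv := (notMem_empty _ hv).elim
  exists_ne i hi := by
    have htwo := S.two_le_card i
    simp [subset_empty.1 hi] at htwo
  weight_eq_zero v _ i hv hi := by
    have htwo := S.two_le_card i
    have hcard := card_erase_of_mem hv
    rw [subset_empty.1 hi, card_empty] at hcard
    omega
  sum_vertexPotential_le := by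
    have hσ : (p.σ : ℝ) ≤ Fintype.card C := by
      nlinarith [p.σ_mul_ζ_le, p.one_le_ζ, (Nat.cast_nonneg p.σ : (0 : ℝ) ≤ p.σ)]
    have hgrowth : ∀ v c, S.growthPotential p.σ (4 * p.σ * 4 ^ p.k) (.uniform b) v c ≤
        Real.exp (4 * p.σ * 4 ^ p.k * lam) := fun v c ↦
      growthPotential_uniform_le (by positivity) (hlam v c)
    have hvertex : ∀ v, S.vertexPotential p (.uniform b) v ≤
        Fintype.card C * (p.θ * Real.exp (4 * p.σ * 4 ^ p.k * lam)) + p.θ' * Real.exp (-p.σ) := by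
      intro v
      refine add_le_add ?_
        (mul_le_mul_of_nonneg_left (ColoringState.massPotential_uniform_le hσ) p.θ'_pos.le)
      rw [← nsmul_eq_mul]
      exact sum_le_card_nsmul univ _ _ fun c _ ↦ mul_le_mul_of_nonneg_left (hgrowth v c) p.θ_pos.le
    refine (sum_le_card_nsmul _ _ _ fun v _ ↦ hvertex v).trans ?_
    simpa [ColoringState.uniform, mul_add] using hpot

lemma exists_invariant {S : ConflictSystem V I C} {p : PotentialParams (Fintype.card C)}
    {lam : ℝ} (hk : ∀ i, (S.edge i).card ≤ p.k)
    (hlam : ∀ v c, ∑ i with v ∈ S.edge i,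
      S.condWeight (fun _ _ ↦ 1 / (Fintype.card C : ℝ)) i v c ≤ lam)
    (hpot : Fintype.card V * (Fintype.card C * (p.θ * Real.exp (4 * p.σ * 4 ^ p.k * lam)) +
      p.θ' * Real.exp (-p.σ)) ≤ 1) (D : Finset V) :
    ∃ st, st.colored = D ∧ S.Invariant p st := by
  induction D using Finset.induction_on with
  | empty =>
    have : Nonempty C := Fintype.card_pos_iff.1 (by exact_mod_cast p.cast_pos)
    exact ⟨_, rfl, Invariant.uniform (fun _ ↦ Classical.arbitrary C) hlam hpot⟩
  | insert u D hu ih =>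
    obtain ⟨st, rfl, H⟩ := ih
    obtain ⟨γ, Hγ⟩ := H.exists_extend hk hu
    exact ⟨_, rfl, Hγ⟩

theorem exists_coloring_avoiding_forbidden {S : ConflictSystem V I C} {k σ : ℕ} {lam ζ : ℝ}
    (hk : ∀ i, (S.edge i).card ≤ k) (hζ : 1 ≤ ζ)
    (hlam : ∀ v c, ∑ i with v ∈ S.edge i,
      S.condWeight (fun _ _ ↦ 1 / (Fintype.card C : ℝ)) i v c ≤ lam)
    (hσC : 16 * σ * ζ ≤ Fintype.card C)
    (hmass : 2 * (Fintype.card V : ℝ) ≤ Real.exp (σ / 2))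
    (hgrowth : 2 * (Fintype.card V : ℝ) * Fintype.card C * Real.exp (4 ^ (k + 1) * σ * lam) ≤
      ζ ^ σ) :
    ∃ b : V → C, ∀ i, ∀ f ∈ S.forbidden i, ∃ z ∈ S.edge i, b z ≠ f z := by
  rcases isEmpty_or_nonempty V with hV | hV
  · refine ⟨isEmptyElim, fun i ↦ ?_⟩
    have htwo := S.two_le_card i
    simp [eq_empty_of_isEmpty (S.edge i)] at htwo
  have hV1 : (1 : ℝ) ≤ Fintype.card V := by exact_mod_cast Fintype.card_pos
  have hσ : 0 < σ := by
    rcases σ.eq_zero_or_pos with rfl | h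
    · norm_num at hmass
      linarith
    · exact h
  have hC : (0 : ℝ) < Fintype.card C := lt_of_lt_of_le (by positivity) hσC
  let p : PotentialParams (Fintype.card C) :=
    { k := k
      σ := σ
      θ := (2 * Fintype.card V * Fintype.card C * Real.exp (4 * σ * 4 ^ k * lam))⁻¹
      θ' := Real.exp σ / (2 * Fintype.card V)
      ζ := ζ
      σ_pos := hσ
      θ_pos := by positivity
      θ'_pos := by positivity
      one_le_ζ := hζ
      σ_mul_ζ_le := hσC
      inv_θ_le := by
        rw [inv_inv]
        rwa [pow_succ', mul_right_comm 4] at hgrowth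
      inv_θ'_le := by
        have hexp : -((σ : ℝ) / 2) + σ = σ / 2 := by ring
        rwa [inv_div, div_le_iff₀ (Real.exp_pos _), ← Real.exp_add, hexp] }
  obtain ⟨st, hst, H⟩ := exists_invariant (p := p) hk hlam (le_of_eq <| by
    simp only [p, Real.exp_neg]
    field) univ
  exact ⟨st.color, fun i ↦ H.exists_ne i (hst ▸ subset_univ _)⟩

end ConflictSystem
end SequentialColoring

section Deficiency

variable {E α : Type*} [DecidableEq α]

/-- The number of color repetitions of the coloring `a` on `F`. -/
def deficiency (a : E → α) (F : Finset E) : ℕ := F.card - (F.image a).card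

lemma deficiency_add_card_image (a : E → α) (F : Finset E) :
    deficiency a F + (F.image a).card = F.card := Nat.sub_add_cancel card_image_le

lemma deficiency_congr {a a' : E → α} {F : Finset E} (h : ∀ x ∈ F, a x = a' x) :
    deficiency a F = deficiency a' F := by
  rw [deficiency, deficiency, image_congr h]

lemma deficiency_le_of_card_le (a : E → α) {F : Finset E} {k : ℕ} (h : F.card ≤ k + 1) :
    deficiency a F ≤ k := by
  rcases F.eq_empty_or_nonempty with rfl | hne
  · simp [deficiency]
  · have := (hne.image a).card_pos
    rw [deficiency]
    omega

lemma deficiency_add_deficiency_le [DecidableEq E] (a : E → α) (F G : Finset E) :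
    deficiency a F + deficiency a G ≤ deficiency a (F ∪ G) + deficiency a (F ∩ G) := by
  have hunion := card_union_add_card_inter F G
  have himage := card_union_add_card_inter (F.image a) (G.image a)
  have hinter := card_le_card (image_inter_subset a F G)
  rw [← image_union] at himage
  have := deficiency_add_card_image a F
  have := deficiency_add_card_image a G
  have := deficiency_add_card_image a (F ∪ G)
  have := deficiency_add_card_image a (F ∩ G)
  omega

lemma deficiency_mono (a : E → α) {F G : Finset E} (h : F ⊆ G) :
    deficiency a F ≤ deficiency a G := by
  classical
  have hsub := deficiency_add_deficiency_le a F (G \ F)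
  have hempty : deficiency a ∅ = 0 := rfl
  rw [union_sdiff_of_subset h, inter_sdiff_self, hempty] at hsub
  lia

lemma exists_card_eq_deficiency [DecidableEq E] {a : E → α} {X F : Finset E} (hX : X ⊆ F)
    (hinj : Set.InjOn a X) :
    ∃ R ⊆ F \ X, R.card = deficiency a F ∧ ∀ x ∈ R, ∃ y ∈ F \ R, a x = a y := by
  obtain ⟨T, hXT, hTF, hT⟩ := hinj.bijOn_image.exists_extend_of_subset (coe_subset.2 hX)
    (Set.image_mono (coe_subset.2 hX)) (Set.surjOn_image a F)
  lift T to Finset E using F.finite_toSet.subset hTF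
  rw [coe_subset] at hXT hTF
  have himage : T.image a = F.image a := by exact_mod_cast hT.image_eq
  refine ⟨F \ T, sdiff_subset_sdiff subset_rfl hXT, ?_, fun x hx ↦ ?_⟩
  · rw [deficiency, ← himage, card_image_of_injOn hT.injOn, card_sdiff_of_subset hTF]
  · obtain ⟨y, hyT, hy⟩ := mem_image.1 (himage ▸ mem_image_of_mem a (mem_sdiff.1 hx).1)
    exact ⟨y, by simp [hyT, hTF hyT], hy.symm⟩

end Deficiency

section CountingColorings

variable {E α : Type*} [Fintype E] [DecidableEq E] [Fintype α] [DecidableEq α]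

/-- The colorings which agree with `a₀` outside `W`. -/
def agreeOff (W : Finset E) (a₀ : E → α) : Finset (E → α) := {a | ∀ x ∉ W, a x = a₀ x}

lemma mem_agreeOff {W : Finset E} {a₀ a : E → α} : a ∈ agreeOff W a₀ ↔ ∀ x ∉ W, a x = a₀ x := by
  simp [agreeOff]

lemma mem_agreeOff_comm {W : Finset E} {a a' : E → α} : a ∈ agreeOff W a' ↔ a' ∈ agreeOff W a := by
  simp only [mem_agreeOff, eq_comm]

lemma card_agreeOff (W : Finset E) (a₀ : E → α) :
    (agreeOff W a₀).card = Fintype.card α ^ W.card := by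
  have hpi : agreeOff W a₀ = Fintype.piFinset fun x ↦ if x ∈ W then univ else {a₀ x} := by
    ext a
    rw [mem_agreeOff, Fintype.mem_piFinset]
    refine forall_congr' fun x ↦ ?_
    split_ifs with h <;> simp [h]
  rw [hpi, Fintype.card_piFinset]
  simp only [apply_ite card, card_univ, card_singleton]
  rw [prod_ite]
  simp

lemma card_mul_pow_le_of_determined {R W : Finset E} {a₀ : E → α} {𝒜 : Finset (E → α)}
    (hRW : R ⊆ W) (h𝒜 : 𝒜 ⊆ agreeOff W a₀)
    (hdet : ∀ a ∈ 𝒜, ∀ a' ∈ 𝒜, (∀ x ∉ R, a x = a' x) → a = a') :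
    𝒜.card * Fintype.card α ^ R.card ≤ Fintype.card α ^ W.card := by
  rw [← card_sdiff_add_card_eq_card hRW, pow_add, ← card_agreeOff (W \ R) a₀]
  refine Nat.mul_le_mul_right _
    (card_le_card_of_injOn (fun a x ↦ if x ∈ R then a₀ x else a x) (fun a ha ↦ ?_) ?_)
  · refine mem_agreeOff.2 fun x hx ↦ ?_
    dsimp only
    split_ifs with hxR
    · rfl
    · exact mem_agreeOff.1 (h𝒜 ha) x fun hxW ↦ hx (mem_sdiff.2 ⟨hxW, hxR⟩)
  · exact fun a ha a' ha' heq ↦ hdet a ha a' ha' fun x hx ↦ by simpa [hx] using congrFun heq x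

lemma card_agreeOff_matching_mul_le {F W R : Finset E} (hW : W ⊆ F) (hRW : R ⊆ W) (a₀ : E → α)
    (partner : F → F) :
    {a ∈ agreeOff W a₀ | ∀ x : F, ↑x ∈ R → (partner x : E) ∉ R ∧ a x = a (partner x)}.card *
      Fintype.card α ^ R.card ≤ Fintype.card α ^ W.card := by
  refine card_mul_pow_le_of_determined hRW (filter_subset _ _) fun a ha a' ha' heq ↦
    funext fun x ↦ ?_
  by_cases hx : x ∈ R
  · have hax := (mem_filter.1 ha).2 ⟨x, hW (hRW hx)⟩ hx
    have hax' := (mem_filter.1 ha').2 ⟨x, hW (hRW hx)⟩ hx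
    rw [hax.2, hax'.2, heq _ hax.1]
  · exact heq x hx

/-- The colorings in `agreeOff W a₀` with `r` repetitions are encoded by a set of `r` repeated
elements and, for each of them, an earlier element of the same color. -/
lemma card_agreeOff_le_deficiency_mul_le {F W : Finset E} (hW : W ⊆ F) (hFW : (F \ W).card ≤ 1)
    (a₀ : E → α) (r : ℕ) :
    (agreeOff W a₀ |>.filter (r ≤ deficiency · F)).card * Fintype.card α ^ r ≤
      (2 * F.card) ^ F.card * Fintype.card α ^ W.card := by
  set 𝒜 : Finset E × (F → F) → Finset (E → α) := fun t ↦
    {a ∈ agreeOff W a₀ | ∀ x : F, ↑x ∈ t.1 → (t.2 x : E) ∉ t.1 ∧ a x = a (t.2 x)}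
  have hcover : {a ∈ agreeOff W a₀ | r ≤ deficiency a F} ⊆
      (W.powersetCard r ×ˢ univ).biUnion 𝒜 := by
    intro a ha
    rw [mem_filter] at ha
    obtain ⟨R, hRW, hRcard, hR⟩ := exists_card_eq_deficiency (a := a)
      (sdiff_subset (s := F) (t := W)) fun x hx y hy _ ↦ card_le_one.1 hFW x hx y hy
    obtain ⟨R', hR', rfl⟩ := exists_subset_card_eq (hRcard ▸ ha.2)
    have hpartner : ∀ x : F, ∃ y : F, ↑x ∈ R' → (y : E) ∉ R' ∧ a x = a y := fun x ↦ by
      by_cases hx : ↑x ∈ R'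
      · obtain ⟨y, hy, hxy⟩ := hR x (hR' hx)
        rw [mem_sdiff] at hy
        exact ⟨⟨y, hy.1⟩, fun _ ↦ ⟨fun h ↦ hy.2 (hR' h), hxy⟩⟩
      · exact ⟨x, fun h ↦ (hx h).elim⟩
    choose h hh using hpartner
    rw [Finset.sdiff_sdiff_eq_self hW] at hRW
    simp only [mem_biUnion, mem_product, mem_powersetCard, mem_univ, and_true]
    exact ⟨(R', h), ⟨hR'.trans hRW, rfl⟩, mem_filter.2 ⟨ha.1, hh⟩⟩
  have hcode : ∀ t ∈ W.powersetCard r ×ˢ univ,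
      (𝒜 t).card * Fintype.card α ^ r ≤ Fintype.card α ^ W.card := by
    rintro ⟨R, h⟩ ht
    rw [mem_product, mem_powersetCard] at ht
    obtain ⟨⟨hRW, rfl⟩, -⟩ := ht
    exact card_agreeOff_matching_mul_le hW hRW a₀ h
  calc _ ≤ (∑ t ∈ W.powersetCard r ×ˢ univ, (𝒜 t).card) * Fintype.card α ^ r :=
        Nat.mul_le_mul_right _ ((card_le_card hcover).trans card_biUnion_le)
    _ ≤ (W.powersetCard r ×ˢ (univ : Finset (F → F))).card * Fintype.card α ^ W.card := by
        rw [sum_mul, ← smul_eq_mul (a := card _)]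
        exact sum_le_card_nsmul _ _ _ hcode
    _ ≤ (2 * F.card) ^ F.card * Fintype.card α ^ W.card := by
        rw [card_product, mul_pow, card_powersetCard]
        gcongr
        · exact (Nat.choose_le_two_pow _ _).trans (by gcongr; norm_num)
        · simp

lemma card_filter_mul_le_of_agreeOff [Nonempty α] {W : Finset E} {𝒜 : Finset (E → α)}
    {ψ : (E → α) → Prop} [DecidablePred ψ] {M K : ℕ} (h𝒜 : ∀ a ∈ 𝒜, agreeOff W a ⊆ 𝒜)
    (hψ : ∀ a, (agreeOff W a |>.filter ψ).card * K ≤ M * Fintype.card α ^ W.card) :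
    (𝒜.filter ψ).card * K ≤ M * 𝒜.card := by
  have hdouble : ∑ a ∈ 𝒜, (agreeOff W a |>.filter ψ).card =
      (𝒜.filter ψ).card * Fintype.card α ^ W.card := by
    have hcount := sum_card_bipartiteAbove_eq_sum_card_bipartiteBelow
      (s := 𝒜) (t := 𝒜.filter ψ) fun a a' ↦ a' ∈ agreeOff W a
    rw [← smul_eq_mul, ← sum_const]
    convert hcount using 2 with a ha a ha
    · congr 1
      ext a'
      simp only [mem_filter, bipartiteAbove]
      exact ⟨fun h ↦ ⟨⟨h𝒜 a ha h.1, h.2⟩, h.1⟩, fun h ↦ ⟨h.2, h.1.2⟩⟩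
    · rw [← card_agreeOff W a]
      congr 1
      ext a'
      simp only [mem_filter, bipartiteBelow, mem_agreeOff_comm (a := a)]
      exact ⟨fun h ↦ ⟨h𝒜 a (mem_filter.1 ha).1 h, h⟩, fun h ↦ h.2⟩
  have hpos : 0 < Fintype.card α ^ W.card := pow_pos Fintype.card_pos _
  refine Nat.le_of_mul_le_mul_right ?_ hpos
  calc (𝒜.filter ψ).card * K * Fintype.card α ^ W.card
      = ∑ a ∈ 𝒜, (agreeOff W a |>.filter ψ).card * K := by rw [← sum_mul, hdouble]; ring
    _ ≤ 𝒜.card * (M * Fintype.card α ^ W.card) := sum_le_card_nsmul _ _ _ fun a _ ↦ hψ a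
    _ = M * 𝒜.card * Fintype.card α ^ W.card := by ring

lemma card_filter_le_deficiency_mul_le [Nonempty α] {F W : Finset E} {𝒜 : Finset (E → α)}
    (hW : W ⊆ F) (hFW : (F \ W).card ≤ 1) (h𝒜 : ∀ a ∈ 𝒜, agreeOff W a ⊆ 𝒜) (r : ℕ) :
    (𝒜.filter (r ≤ deficiency · F)).card * Fintype.card α ^ r ≤
      (2 * F.card) ^ F.card * 𝒜.card :=
  card_filter_mul_le_of_agreeOff h𝒜 fun a ↦ card_agreeOff_le_deficiency_mul_le hW hFW a r

end CountingColorings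

section BoundedColorings

/-- The sets in `𝒰` through a given element, weighted by a bound for the probability that a random
coloring violates their constraint, have total weight at most `1 / 2`. This is the condition for a
local-lemma type argument. -/
def IsLocallySparse {E : Type*} [DecidableEq E] (α : Type*) [Fintype α] (𝒰 : Finset (Finset E))
    (ρ : Finset E → ℕ) : Prop :=
  ∀ g, ∑ U ∈ 𝒰 with g ∈ U,
    (4 * U.card : ℝ) ^ U.card * (1 / (Fintype.card α : ℝ)) ^ (ρ U + 1) ≤ 1 / 2

lemma le_mul_one_div_pow_of_mul_pow_le {A x y M : ℝ} {k : ℕ} (hA : 0 < A)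
    (h : x * A ^ k ≤ M * y) : x ≤ M * (1 / A) ^ k * y := by
  rw [one_div_pow, mul_one_div, div_mul_eq_mul_div]
  exact (le_div_iff₀ (pow_pos hA k)).2 h

lemma monotone_mul_pow_self {c : ℕ} (hc : 0 < c) : Monotone fun m ↦ (c * m) ^ m := by
  intro m e hme
  rcases e.eq_zero_or_pos with rfl | he
  · simp_all
  exact pow_le_pow (Nat.mul_le_mul_left c hme) (Nat.mul_pos hc he) hme

lemma two_mul_pow_mul_two_pow_le {k m e : ℕ} (hkm : k ≤ m) (hme : m ≤ e) :
    (2 * m) ^ m * 2 ^ k ≤ (4 * e) ^ e :=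
  calc (2 * m) ^ m * 2 ^ k ≤ (2 * m) ^ m * 2 ^ m := by gcongr; norm_num
    _ = (4 * m) ^ m := by rw [← mul_pow]; ring
    _ ≤ (4 * e) ^ e := monotone_mul_pow_self four_pos hme

variable {E α : Type*} [Fintype E] [DecidableEq E] [Fintype α] [DecidableEq α]
  {𝒰 : Finset (Finset E)} {ρ : Finset E → ℕ} {G G' W : Finset E}

/-- The colorings which have at most `ρ U` repetitions on `U ∩ G`, for each `U ∈ 𝒰`. Taking `G`
from `∅` to `univ` exposes the constraints one element of `E` at a time. -/
def boundedColorings (α : Type*) [Fintype α] [DecidableEq α] (𝒰 : Finset (Finset E))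
    (ρ : Finset E → ℕ) (G : Finset E) : Finset (E → α) :=
  {a | ∀ U ∈ 𝒰, deficiency a (U ∩ G) ≤ ρ U}

lemma mem_boundedColorings {a : E → α} :
    a ∈ boundedColorings α 𝒰 ρ G ↔ ∀ U ∈ 𝒰, deficiency a (U ∩ G) ≤ ρ U := by
  simp [boundedColorings]

lemma boundedColorings_anti (h : G' ⊆ G) :
    boundedColorings α 𝒰 ρ G ⊆ boundedColorings α 𝒰 ρ G' := fun a ha ↦
  mem_boundedColorings.2 fun U hU ↦
    (deficiency_mono a (inter_subset_inter_left h)).trans (mem_boundedColorings.1 ha U hU)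

lemma agreeOff_subset_boundedColorings (hGW : Disjoint G W) {a : E → α}
    (ha : a ∈ boundedColorings α 𝒰 ρ G) : agreeOff W a ⊆ boundedColorings α 𝒰 ρ G :=
  fun a' ha' ↦ mem_boundedColorings.2 fun U hU ↦ by
    rw [deficiency_congr fun x hx ↦
      mem_agreeOff.1 ha' x (disjoint_left.1 hGW (mem_inter.1 hx).2)]
    exact mem_boundedColorings.1 ha U hU

lemma agreeOff_subset_filter_boundedColorings {𝒮 : Finset (Finset E)} {r : ℕ}
    (hGW : Disjoint G W) (h𝒮 : ∀ S ∈ 𝒮, Disjoint S W) {a : E → α}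
    (ha : a ∈ {a ∈ boundedColorings α 𝒰 ρ G | ∀ S ∈ 𝒮, r ≤ deficiency a S}) :
    agreeOff W a ⊆ {a ∈ boundedColorings α 𝒰 ρ G | ∀ S ∈ 𝒮, r ≤ deficiency a S} := by
  intro a' ha'
  rw [mem_filter] at ha ⊢
  refine ⟨agreeOff_subset_boundedColorings hGW ha.1 ha', fun S hS ↦ ?_⟩
  rw [deficiency_congr fun y hy ↦ mem_agreeOff.1 ha' y (disjoint_left.1 (h𝒮 S hS) hy)]
  exact ha.2 S hS

lemma card_boundedColorings_sdiff_le_of_insert_le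
    (hinsert : ∀ H : Finset E, ∀ g ∉ H, H.card < G.card →
      (boundedColorings α 𝒰 ρ H).card ≤ 2 * (boundedColorings α 𝒰 ρ (insert g H)).card) :
    (boundedColorings α 𝒰 ρ (G \ W)).card ≤ 2 ^ W.card * (boundedColorings α 𝒰 ρ G).card := by
  induction W using Finset.induction_on with
  | empty => simp
  | insert w W hw ih =>
    rw [card_insert_of_notMem hw, pow_succ]
    by_cases hwG : w ∈ G
    · have hstep := hinsert (G \ insert w W) w (by simp) (card_lt_card <| by
        refine ⟨sdiff_subset, fun h ↦ ?_⟩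
        simpa using h hwG)
      have heq : insert w (G \ insert w W) = G \ W := by
        ext x
        by_cases hx : x = w <;> simp [hx, hwG, hw]
      rw [heq] at hstep
      linarith
    · have heq : G \ insert w W = G \ W := by
        ext x
        by_cases hx : x = w <;> simp [hx, hwG]
      rw [heq]
      linarith [Nat.zero_le (2 ^ W.card * (boundedColorings α 𝒰 ρ G).card)]

lemma boundedColorings_subset_union_biUnion (g : E) :
    boundedColorings α 𝒰 ρ G ⊆ boundedColorings α 𝒰 ρ (insert g G) ∪
      {U ∈ 𝒰 | g ∈ U}.biUnion fun U ↦
        {a ∈ boundedColorings α 𝒰 ρ (G \ U) | ρ U + 1 ≤ deficiency a (U ∩ insert g G)} := by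
  intro a ha
  rw [mem_union, or_iff_not_imp_left, mem_boundedColorings]
  intro hbad
  push Not at hbad
  obtain ⟨U, hU, hlt⟩ := hbad
  have hgU : g ∈ U := by
    by_contra hgU
    rw [inter_insert_of_notMem hgU] at hlt
    exact hlt.not_ge (mem_boundedColorings.1 ha U hU)
  exact mem_biUnion.2 ⟨U, mem_filter.2 ⟨hU, hgU⟩,
    mem_filter.2 ⟨boundedColorings_anti sdiff_subset ha, hlt⟩⟩

variable [Nonempty α]

lemma card_filter_lt_deficiency_le {U : Finset E} (g : E)
    (hdrop : (boundedColorings α 𝒰 ρ (G \ U)).card ≤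
      2 ^ (G ∩ U).card * (boundedColorings α 𝒰 ρ G).card) :
    ({a ∈ boundedColorings α 𝒰 ρ (G \ U) | ρ U + 1 ≤ deficiency a (U ∩ insert g G)}.card : ℝ) ≤
      (4 * U.card : ℝ) ^ U.card * (1 / (Fintype.card α : ℝ)) ^ (ρ U + 1) *
        (boundedColorings α 𝒰 ρ G).card := by
  have hcount := card_filter_le_deficiency_mul_le (W := U ∩ insert g G) subset_rfl (by simp)
    (fun a ha ↦ agreeOff_subset_boundedColorings
      (disjoint_of_subset_right inter_subset_left sdiff_disjoint) ha) (ρ U + 1)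
    (𝒜 := boundedColorings α 𝒰 ρ (G \ U))
  have hle : (G ∩ U).card ≤ (U ∩ insert g G).card := by
    rw [inter_comm]
    exact card_le_card (inter_subset_inter_left (subset_insert g G))
  refine le_mul_one_div_pow_of_mul_pow_le (by positivity) ?_
  exact_mod_cast (hcount.trans (Nat.mul_le_mul_left _ hdrop)).trans <| by
    rw [← mul_assoc]
    exact Nat.mul_le_mul_right _
      (two_mul_pow_mul_two_pow_le hle (card_le_card inter_subset_left))

lemma card_boundedColorings_le_two_mul_insert (hsparse : IsLocallySparse α 𝒰 ρ) (G : Finset E)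
    (g : E) :
    (boundedColorings α 𝒰 ρ G).card ≤ 2 * (boundedColorings α 𝒰 ρ (insert g G)).card := by
  induction hn : G.card using Nat.strong_induction_on generalizing G g with | _ n ih
  set bad : Finset E → Finset (E → α) := fun U ↦
    {a ∈ boundedColorings α 𝒰 ρ (G \ U) | ρ U + 1 ≤ deficiency a (U ∩ insert g G)}
  have hdrop (U : Finset E) : (boundedColorings α 𝒰 ρ (G \ U)).card ≤
      2 ^ (G ∩ U).card * (boundedColorings α 𝒰 ρ G).card := by
    rw [← sdiff_inter_self_left G U]
    exact card_boundedColorings_sdiff_le_of_insert_le fun H g _ hH ↦ ih H.card (hn ▸ hH) H g rfl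
  have hcover : ((boundedColorings α 𝒰 ρ G).card : ℝ) ≤
      (boundedColorings α 𝒰 ρ (insert g G)).card + ∑ U ∈ 𝒰 with g ∈ U, ((bad U).card : ℝ) := by
    exact_mod_cast (card_le_card (boundedColorings_subset_union_biUnion g)).trans
      ((card_union_le _ _).trans (Nat.add_le_add_left card_biUnion_le _))
  have hsum : ∑ U ∈ 𝒰 with g ∈ U, ((bad U).card : ℝ) ≤
      1 / 2 * (boundedColorings α 𝒰 ρ G).card := by
    refine (sum_le_sum fun U _ ↦ card_filter_lt_deficiency_le g (hdrop U)).trans ?_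
    rw [← sum_mul]
    exact mul_le_mul_of_nonneg_right (hsparse g) (Nat.cast_nonneg _)
  have : ((boundedColorings α 𝒰 ρ G).card : ℝ) ≤
      2 * (boundedColorings α 𝒰 ρ (insert g G)).card := by linarith
  exact_mod_cast this

lemma card_boundedColorings_sdiff_le (hsparse : IsLocallySparse α 𝒰 ρ) (G W : Finset E) :
    (boundedColorings α 𝒰 ρ (G \ W)).card ≤ 2 ^ W.card * (boundedColorings α 𝒰 ρ G).card :=
  card_boundedColorings_sdiff_le_of_insert_le fun H g _ _ ↦
    card_boundedColorings_le_two_mul_insert hsparse H g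

lemma card_boundedColorings_univ_pos (hsparse : IsLocallySparse α 𝒰 ρ) :
    0 < (boundedColorings α 𝒰 ρ univ).card := by
  have hle := card_boundedColorings_sdiff_le hsparse univ univ
  have hempty : 0 < (boundedColorings α 𝒰 ρ (univ \ univ)).card :=
    card_pos.2 ⟨fun _ ↦ Classical.arbitrary α, mem_boundedColorings.2 fun U _ ↦ by
      simp [deficiency]⟩
  exact Nat.pos_of_mul_pos_left (hempty.trans_le hle)

/-- The sets in `𝒮` overlap only in `x`, so their repetitions are nearly independent. -/
lemma card_filter_forall_le_deficiency_mul_le (hsparse : IsLocallySparse α 𝒰 ρ) {x : E} {e r : ℕ}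
    {𝒮 : Finset (Finset E)} (h𝒮 : ∀ S ∈ 𝒮, x ∈ S ∧ S.card ≤ e)
    (hinter : ∀ S ∈ 𝒮, ∀ S' ∈ 𝒮, S ≠ S' → S ∩ S' ⊆ {x}) (G : Finset E) :
    {a ∈ boundedColorings α 𝒰 ρ G | ∀ S ∈ 𝒮, r ≤ deficiency a S}.card *
        (Fintype.card α ^ r) ^ 𝒮.card ≤
      ((4 * e) ^ e) ^ 𝒮.card * (boundedColorings α 𝒰 ρ G).card := by
  induction 𝒮 using Finset.induction_on generalizing G with
  | empty => simp
  | insert S 𝒮 hS ih =>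
    rw [forall_mem_insert] at h𝒮
    set W := S.erase x
    set 𝒜 : Finset (E → α) :=
      {a ∈ boundedColorings α 𝒰 ρ (G \ W) | ∀ S' ∈ 𝒮, r ≤ deficiency a S'}
    have hdisj : ∀ S' ∈ 𝒮, Disjoint S' W := fun S' hS' ↦ disjoint_left.2 fun y hy hyW ↦ by
      rw [mem_erase] at hyW
      exact hyW.1 (mem_singleton.1 (hinter S (mem_insert_self S 𝒮) S' (mem_insert_of_mem hS')
        (fun h ↦ hS (h ▸ hS')) (mem_inter.2 ⟨hyW.2, hy⟩)))
    have h𝒜 : ∀ a ∈ 𝒜, agreeOff W a ⊆ 𝒜 := fun a ha ↦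
      agreeOff_subset_filter_boundedColorings sdiff_disjoint hdisj ha
    have hsub : {a ∈ boundedColorings α 𝒰 ρ G | ∀ S' ∈ insert S 𝒮, r ≤ deficiency a S'} ⊆
        𝒜.filter (r ≤ deficiency · S) := fun a ha ↦ by
      simp only [mem_filter, forall_mem_insert] at ha
      simp only [𝒜, mem_filter]
      exact ⟨⟨boundedColorings_anti sdiff_subset ha.1, ha.2.2⟩, ha.2.1⟩
    have hcount := (Nat.mul_le_mul_right _ (card_le_card hsub)).trans
      (card_filter_le_deficiency_mul_le (erase_subset x S) (by simp [sdiff_erase_self h𝒮.1.1])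
        h𝒜 r)
    have hrest := (ih h𝒮.2 (fun S hS S' hS' ↦ hinter S (mem_insert_of_mem hS) S'
      (mem_insert_of_mem hS')) (G \ W)).trans
      (Nat.mul_le_mul_left _ (card_boundedColorings_sdiff_le hsparse G W))
    rw [card_insert_of_notMem hS, pow_succ', pow_succ', ← mul_assoc]
    calc _ ≤ (2 * S.card) ^ S.card * (𝒜.card * (Fintype.card α ^ r) ^ 𝒮.card) := by
          rw [← mul_assoc]
          exact Nat.mul_le_mul_right _ hcount
      _ ≤ _ := Nat.mul_le_mul_left _ hrest
      _ = (2 * S.card) ^ S.card * 2 ^ W.card *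
          (((4 * e) ^ e) ^ 𝒮.card * (boundedColorings α 𝒰 ρ G).card) := by ring
      _ ≤ _ := by
          rw [mul_assoc ((4 * e) ^ e)]
          exact Nat.mul_le_mul_right _ (two_mul_pow_mul_two_pow_le card_erase_le h𝒮.1.2)

lemma card_filter_forall_le_deficiency_le (hsparse : IsLocallySparse α 𝒰 ρ) {x : E} {e r : ℕ}
    {𝒮 : Finset (Finset E)} (h𝒮 : ∀ S ∈ 𝒮, x ∈ S ∧ S.card ≤ e)
    (hinter : ∀ S ∈ 𝒮, ∀ S' ∈ 𝒮, S ≠ S' → S ∩ S' ⊆ {x}) (G : Finset E) :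
    ({a ∈ boundedColorings α 𝒰 ρ G | ∀ S ∈ 𝒮, r ≤ deficiency a S}.card : ℝ) ≤
      ((4 * e : ℝ) ^ e * (1 / (Fintype.card α : ℝ)) ^ r) ^ 𝒮.card *
        (boundedColorings α 𝒰 ρ G).card := by
  have hcount := card_filter_forall_le_deficiency_mul_le hsparse (r := r) h𝒮 hinter G
  rw [← pow_mul] at hcount
  rw [mul_pow, ← pow_mul (1 / _)]
  refine le_mul_one_div_pow_of_mul_pow_le (A := Fintype.card α) (by positivity) ?_
  exact_mod_cast hcount

end BoundedColorings

theorem exists_coloring_deficiency_le {E α : Type*} [Finite E] [DecidableEq E] [Fintype α]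
    [DecidableEq α] [Nonempty α] {𝒰 : Finset (Finset E)} {ρ : Finset E → ℕ}
    (hsparse : IsLocallySparse α 𝒰 ρ) {T : Type*} [Fintype T] {x : T → E}
    {𝒞 : T → Finset (Finset E)} {e : ℕ}
    (h𝒞 : ∀ t, ∀ S ∈ 𝒞 t, x t ∈ S ∧ S.card ≤ e) {r m : T → ℕ}
    (hsum : ∑ t, ((𝒞 t).card.choose (m t) : ℝ) *
      ((4 * e : ℝ) ^ e * (1 / (Fintype.card α : ℝ)) ^ r t) ^ m t < 1) :
    ∃ a : E → α, (∀ U ∈ 𝒰, deficiency a U ≤ ρ U) ∧ ∀ t, ∀ 𝒮 ⊆ 𝒞 t, 𝒮.card = m t →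
      (∀ S ∈ 𝒮, ∀ S' ∈ 𝒮, S ≠ S' → S ∩ S' ⊆ {x t}) → ∃ S ∈ 𝒮, deficiency a S < r t := by
  have := Fintype.ofFinite E
  by_contra! hcon
  set 𝒵 := boundedColorings α 𝒰 ρ univ
  set 𝒟 : T → Finset (Finset (Finset E)) := fun t ↦
    {𝒮 ∈ (𝒞 t).powersetCard (m t) | ∀ S ∈ 𝒮, ∀ S' ∈ 𝒮, S ≠ S' → S ∩ S' ⊆ {x t}}
  set bad : T → Finset (Finset E) → Finset (E → α) := fun t 𝒮 ↦
    {a ∈ 𝒵 | ∀ S ∈ 𝒮, r t ≤ deficiency a S}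
  have hcover : 𝒵 ⊆ univ.biUnion fun t ↦ (𝒟 t).biUnion (bad t) := by
    intro a ha
    obtain ⟨t, 𝒮, hsub, hcard, hinter, hr⟩ := hcon a fun U hU ↦ by
      simpa using mem_boundedColorings.1 ha U hU
    simp only [mem_biUnion, mem_univ, true_and]
    exact ⟨t, 𝒮, mem_filter.2 ⟨mem_powersetCard.2 ⟨hsub, hcard⟩, hinter⟩, mem_filter.2 ⟨ha, hr⟩⟩
  have hbad : ∀ t, ∀ 𝒮 ∈ 𝒟 t, ((bad t 𝒮).card : ℝ) ≤
      ((4 * e : ℝ) ^ e * (1 / (Fintype.card α : ℝ)) ^ r t) ^ m t * 𝒵.card := by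
    intro t 𝒮 h𝒮
    obtain ⟨hmem, hinter⟩ := mem_filter.1 h𝒮
    obtain ⟨hsub, hcard⟩ := mem_powersetCard.1 hmem
    rw [← hcard]
    exact card_filter_forall_le_deficiency_le hsparse (fun S hS ↦ h𝒞 t S (hsub hS)) hinter univ
  have hunion : (𝒵.card : ℝ) ≤ ∑ t, ∑ 𝒮 ∈ 𝒟 t, ((bad t 𝒮).card : ℝ) := by
    exact_mod_cast (card_le_card hcover).trans
      (card_biUnion_le.trans (sum_le_sum fun t _ ↦ card_biUnion_le))
  have hchoose : ∀ t, ((𝒟 t).card : ℝ) ≤ (𝒞 t).card.choose (m t) := fun t ↦ by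
    exact_mod_cast (card_filter_le _ _).trans (card_powersetCard _ _).le
  have hpos : (0 : ℝ) < 𝒵.card := by exact_mod_cast card_boundedColorings_univ_pos hsparse
  refine (hunion.trans ?_).not_gt (mul_lt_of_lt_one_left hpos hsum)
  rw [sum_mul]
  refine sum_le_sum fun t _ ↦ (sum_le_card_nsmul _ _ _ (hbad t)).trans ?_
  rw [nsmul_eq_mul, mul_assoc]
  exact mul_le_mul_of_nonneg_right (hchoose t) (by positivity)

section EdgesOf

variable {W : Type} [DecidableEq W] {S T : Finset W}

lemma mk_mem_edgesOf {x y : W} : s(x, y) ∈ edgesOf S ↔ x ∈ S ∧ y ∈ S ∧ x ≠ y := by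
  simp [edgesOf, and_assoc]

lemma edgesOf_inter (S T : Finset W) : edgesOf (S ∩ T) = edgesOf S ∩ edgesOf T := by
  rw [edgesOf, edgesOf, edgesOf, ← filter_inter_distrib]
  congr 1
  ext e
  simp only [mem_sym2_iff, mem_inter]
  exact forall₂_and

lemma edgesOf_mono (h : S ⊆ T) : edgesOf S ⊆ edgesOf T :=
  filter_subset_filter _ (sym2_mono h)

lemma card_edgesOf (S : Finset W) : (edgesOf S).card = S.card.choose 2 := by
  rw [edgesOf, sym2_eq_image, Sym2.filter_image_mk_not_isDiag, Sym2.card_image_offDiag]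

lemma two_le_card_of_mem_edgesOf {e : Sym2 W} (he : e ∈ edgesOf S) : 2 ≤ S.card := by
  have hpos : 0 < (edgesOf S).card := card_pos.2 ⟨e, he⟩
  by_contra! hlt
  rw [card_edgesOf, Nat.choose_eq_zero_of_lt hlt] at hpos
  exact hpos.false

lemma three_le_card_of_mem_edgesOf {e e' : Sym2 W} (he : e ∈ edgesOf S) (he' : e' ∈ edgesOf S)
    (hne : e ≠ e') : 3 ≤ S.card := by
  have hcard : 1 < (edgesOf S).card := one_lt_card.2 ⟨e, he, e', he', hne⟩
  by_contra! hlt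
  have := Nat.choose_le_choose 2 (Nat.le_of_lt_succ hlt)
  rw [card_edgesOf] at hcard
  exact absurd hcard (not_lt.2 this)

end EdgesOf

section Excess

variable {W α : Type*} [DecidableEq α]

/-- The amount by which `P * deficiency a F` exceeds `d * (#U - 2)`, for a set `F` of edges on the
vertex set `U`. -/
def excess (a : Sym2 W → α) (P d : ℕ) (F : Finset (Sym2 W)) (U : Finset W) : ℤ :=
  P * deficiency a F + 2 * d - d * U.card

lemma excess_mono {a : Sym2 W → α} {F G : Finset (Sym2 W)} (h : F ⊆ G) (P d : ℕ)
    (U : Finset W) : excess a P d F U ≤ excess a P d G U := by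
  have hdef : (deficiency a F : ℤ) ≤ deficiency a G := by exact_mod_cast deficiency_mono a h
  unfold excess
  linear_combination (P : ℤ) * hdef

variable [DecidableEq W]

lemma excess_add_excess_le (a : Sym2 W → α) (P d : ℕ) (F G : Finset (Sym2 W)) (U T : Finset W) :
    excess a P d F U + excess a P d G T ≤
      excess a P d (F ∪ G) (U ∪ T) + excess a P d (F ∩ G) (U ∩ T) := by
  have hcard : ((U ∪ T).card + (U ∩ T).card : ℤ) = U.card + T.card := by
    exact_mod_cast card_union_add_card_inter U T
  have hdef : (deficiency a F + deficiency a G : ℤ) ≤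
      deficiency a (F ∪ G) + deficiency a (F ∩ G) := by
    exact_mod_cast deficiency_add_deficiency_le a F G
  unfold excess
  linear_combination (P : ℤ) * hdef + (d : ℤ) * hcard

lemma excess_add_excess_le_of_inter {a : Sym2 W → α} {F G : Finset (Sym2 W)} {U T : Finset W}
    {k s : ℕ} (hF : (F ∩ G).card ≤ k + 1) (hU : s + 2 ≤ (U ∩ T).card) (P d : ℕ) :
    excess a P d F U + excess a P d G T ≤ excess a P d (F ∪ G) (U ∪ T) + (P * k - d * s) := by
  have hdef : (deficiency a (F ∩ G) : ℤ) ≤ k := by exact_mod_cast deficiency_le_of_card_le a hF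
  have hcard : (s + 2 : ℤ) ≤ (U ∩ T).card := by exact_mod_cast hU
  have hinter : excess a P d (F ∩ G) (U ∩ T) ≤ P * k - d * s := by
    unfold excess
    linear_combination (P : ℤ) * hdef + (d : ℤ) * hcard
  linear_combination excess_add_excess_le a P d F G U T + hinter

end Excess

section Critical

variable {W : Type} {α : Type*} [DecidableEq W] [DecidableEq α] {a : Sym2 W → α} {P d : ℕ}

/-- No set of at most `4 (P + 2)` vertices has positive excess. The bound `4 (P + 2)` leaves room
for the union of four critical sets. -/
def HasNoExcess (a : Sym2 W → α) (P d : ℕ) : Prop :=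
  ∀ U : Finset W, 3 ≤ U.card → U.card ≤ 4 * (P + 2) → excess a P d (edgesOf U) U ≤ 0

/-- The inclusion-minimal vertex sets of excess zero. A set of `P + 2` vertices on which the first
coloring has as many repetitions as allowed contains such a set. -/
structure IsCritical (a : Sym2 W → α) (P d : ℕ) (T : Finset W) : Prop where
  three_le_card : 3 ≤ T.card
  card_le : T.card ≤ P + 2
  excess_eq_zero : excess a P d (edgesOf T) T = 0
  excess_neg_of_ssubset : ∀ T' ⊂ T, 3 ≤ T'.card → excess a P d (edgesOf T') T' < 0

lemma HasNoExcess.exists_isCritical_subset (ha : HasNoExcess a P d) {S : Finset W}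
    (hS : 3 ≤ S.card) (hSP : S.card ≤ P + 2) (hzero : excess a P d (edgesOf S) S = 0) :
    ∃ T ⊆ S, IsCritical a P d T := by
  induction S using Finset.strongInduction with
  | H S ih =>
    by_cases! hmin : ∀ T' ⊂ S, 3 ≤ T'.card → excess a P d (edgesOf T') T' < 0
    · exact ⟨S, subset_rfl, hS, hSP, hzero, hmin⟩
    · obtain ⟨T', hss, hcard, hge⟩ := hmin
      have := card_le_card hss.subset
      obtain ⟨T, hT, hcrit⟩ := ih T' hss hcard (by lia)
        ((ha T' hcard (by lia)).antisymm hge)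
      exact ⟨T, hT.trans hss.subset, hcrit⟩

lemma HasNoExcess.excess_nonpos (ha : HasNoExcess a P d) {F : Finset (Sym2 W)} {U : Finset W}
    (hF : F ⊆ edgesOf U) (hU : 3 ≤ U.card) (hUP : U.card ≤ 4 * (P + 2)) :
    excess a P d F U ≤ 0 :=
  (excess_mono hF P d U).trans (ha U hU hUP)

lemma edgesOf_union_subset (S T : Finset W) : edgesOf S ∪ edgesOf T ⊆ edgesOf (S ∪ T) :=
  union_subset (edgesOf_mono subset_union_left) (edgesOf_mono subset_union_right)

namespace IsCritical

variable {T T₁ T₂ T₃ T₄ : Finset W}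

lemma card_inter_le_two (ha : HasNoExcess a P d) (h₁ : IsCritical a P d T₁)
    (h₂ : IsCritical a P d T₂) (hne : T₁ ≠ T₂) : (T₁ ∩ T₂).card ≤ 2 := by
  by_contra! hcard
  have hinter : excess a P d (edgesOf (T₁ ∩ T₂)) (T₁ ∩ T₂) < 0 := by
    by_cases h : T₁ ∩ T₂ = T₁
    · refine h₂.excess_neg_of_ssubset _ (inter_subset_right.ssubset_of_ne fun h' ↦ ?_) hcard
      exact hne (h.symm.trans h')
    · exact h₁.excess_neg_of_ssubset _ (inter_subset_left.ssubset_of_ne h) hcard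
  have hmerge := excess_add_excess_le a P d (edgesOf T₁) (edgesOf T₂) T₁ T₂
  rw [h₁.excess_eq_zero, h₂.excess_eq_zero, ← edgesOf_inter] at hmerge
  have := h₁.three_le_card
  have := h₁.card_le
  have := h₂.card_le
  have := card_le_card (subset_union_left (s₁ := T₁) (s₂ := T₂))
  have := card_union_le T₁ T₂
  have := ha.excess_nonpos (edgesOf_union_subset T₁ T₂) (by lia) (by lia)
  lia

lemma card_edgesOf_inter_le_one (ha : HasNoExcess a P d) (h₁ : IsCritical a P d T₁)
    (h₂ : IsCritical a P d T₂) (hne : T₁ ≠ T₂) : (edgesOf T₁ ∩ edgesOf T₂).card ≤ 1 := by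
  rw [← edgesOf_inter, card_edgesOf]
  exact Nat.choose_le_choose 2 (card_inter_le_two ha h₁ h₂ hne)

lemma eq_of_mem_edgesOf (ha : HasNoExcess a P d) (h₁ : IsCritical a P d T₁)
    (h₂ : IsCritical a P d T₂) {x y : Sym2 W} (hxy : x ≠ y) (hx₁ : x ∈ edgesOf T₁)
    (hy₁ : y ∈ edgesOf T₁) (hx₂ : x ∈ edgesOf T₂) (hy₂ : y ∈ edgesOf T₂) : T₁ = T₂ := by
  by_contra hne
  exact hxy (card_le_one.1 (card_edgesOf_inter_le_one ha h₁ h₂ hne) x (mem_inter.2 ⟨hx₁, hx₂⟩)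
    y (mem_inter.2 ⟨hy₁, hy₂⟩))

lemma card_union_edgesOf_inter_le (ha : HasNoExcess a P d) (h : IsCritical a P d T)
    (h₁ : IsCritical a P d T₁) (hne : T₁ ≠ T) {F : Finset (Sym2 W)} {k : ℕ}
    (hF : (F ∩ edgesOf T).card ≤ k) : ((F ∪ edgesOf T₁) ∩ edgesOf T).card ≤ k + 1 := by
  rw [union_inter_distrib_right]
  exact (card_union_le _ _).trans (add_le_add hF (card_edgesOf_inter_le_one ha h₁ h hne))

lemma excess_le_excess_union (h : IsCritical a P d T) {F : Finset (Sym2 W)} {U : Finset W}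
    {k s : ℕ} (hF : (F ∩ edgesOf T).card ≤ k + 1) (hU : s + 2 ≤ (U ∩ T).card) :
    excess a P d F U ≤ excess a P d (F ∪ edgesOf T) (U ∪ T) + (P * k - d * s) := by
  simpa [h.excess_eq_zero] using excess_add_excess_le_of_inter (a := a) hF hU P d

/-- Two critical sets sharing an edge have a union of excess at least zero, and a third one
meeting it in two edges, hence three vertices, pushes the excess above zero. -/
lemma no_triangle (ha : HasNoExcess a P d) (hd : P < d) (h₁ : IsCritical a P d T₁)
    (h₂ : IsCritical a P d T₂) (h₃ : IsCritical a P d T₃) (h₁₂ : T₁ ≠ T₂) (h₂₃ : T₂ ≠ T₃)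
    (h₁₃ : T₁ ≠ T₃) {x y z : Sym2 W} (hyz : y ≠ z) (hx₁ : x ∈ edgesOf T₁) (hx₂ : x ∈ edgesOf T₂)
    (hy₂ : y ∈ edgesOf T₂) (hy₃ : y ∈ edgesOf T₃) (hz₃ : z ∈ edgesOf T₃) (hz₁ : z ∈ edgesOf T₁) :
    False := by
  have hsub : edgesOf T₁ ∪ edgesOf T₂ ⊆ edgesOf (T₁ ∪ T₂) := edgesOf_union_subset T₁ T₂
  have hmerge₂ := h₂.excess_le_excess_union (k := 0) (s := 0)
    (card_edgesOf_inter_le_one ha h₁ h₂ h₁₂)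
    (two_le_card_of_mem_edgesOf (edgesOf_inter T₁ T₂ ▸ mem_inter.2 ⟨hx₁, hx₂⟩))
  have hmerge₃ := h₃.excess_le_excess_union (k := 1) (s := 1) (U := T₁ ∪ T₂)
    (card_union_edgesOf_inter_le ha h₃ h₂ h₂₃ (card_edgesOf_inter_le_one ha h₁ h₃ h₁₃))
    (three_le_card_of_mem_edgesOf
      (edgesOf_inter _ T₃ ▸ mem_inter.2 ⟨hsub (mem_union_right _ hy₂), hy₃⟩)
      (edgesOf_inter _ T₃ ▸ mem_inter.2 ⟨hsub (mem_union_left _ hz₁), hz₃⟩) hyz)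
  rw [h₁.excess_eq_zero] at hmerge₂
  have hcard := card_le_card (subset_union_right (s₁ := T₁ ∪ T₂) (s₂ := T₃))
  have := card_union_le (T₁ ∪ T₂) T₃
  have := card_union_le T₁ T₂
  have := h₃.three_le_card
  have := h₁.card_le
  have := h₂.card_le
  have := h₃.card_le
  have := ha.excess_nonpos
    ((union_subset_union_left hsub).trans (edgesOf_union_subset _ T₃)) (by lia) (by lia)
  push_cast at hmerge₂ hmerge₃
  lia

lemma no_quadrilateral (ha : HasNoExcess a P d) (hd : 3 * P < d) (h₁ : IsCritical a P d T₁)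
    (h₂ : IsCritical a P d T₂) (h₃ : IsCritical a P d T₃) (h₄ : IsCritical a P d T₄)
    (h₁₂ : T₁ ≠ T₂) (h₁₃ : T₁ ≠ T₃) (h₁₄ : T₁ ≠ T₄) (h₂₃ : T₂ ≠ T₃) (h₂₄ : T₂ ≠ T₄)
    (h₃₄ : T₃ ≠ T₄) {x y z w : Sym2 W} (hzw : z ≠ w) (hx₁ : x ∈ edgesOf T₁)
    (hx₂ : x ∈ edgesOf T₂) (hy₂ : y ∈ edgesOf T₂) (hy₃ : y ∈ edgesOf T₃) (hz₃ : z ∈ edgesOf T₃)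
    (hz₄ : z ∈ edgesOf T₄) (hw₄ : w ∈ edgesOf T₄) (hw₁ : w ∈ edgesOf T₁) : False := by
  have hsub : edgesOf T₁ ∪ edgesOf T₂ ⊆ edgesOf (T₁ ∪ T₂) := edgesOf_union_subset T₁ T₂
  have hsub' : edgesOf T₁ ∪ edgesOf T₂ ∪ edgesOf T₃ ⊆ edgesOf (T₁ ∪ T₂ ∪ T₃) :=
    (union_subset_union_left hsub).trans (edgesOf_union_subset _ T₃)
  have hmerge₂ := h₂.excess_le_excess_union (k := 0) (s := 0)
    (card_edgesOf_inter_le_one ha h₁ h₂ h₁₂)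
    (two_le_card_of_mem_edgesOf (edgesOf_inter T₁ T₂ ▸ mem_inter.2 ⟨hx₁, hx₂⟩))
  have hmerge₃ := h₃.excess_le_excess_union (k := 1) (s := 0) (U := T₁ ∪ T₂)
    (card_union_edgesOf_inter_le ha h₃ h₂ h₂₃ (card_edgesOf_inter_le_one ha h₁ h₃ h₁₃))
    (two_le_card_of_mem_edgesOf
      (edgesOf_inter _ T₃ ▸ mem_inter.2 ⟨hsub (mem_union_right _ hy₂), hy₃⟩))
  have hmerge₄ := h₄.excess_le_excess_union (k := 2) (s := 1) (U := T₁ ∪ T₂ ∪ T₃)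
    (card_union_edgesOf_inter_le ha h₄ h₃ h₃₄
      (card_union_edgesOf_inter_le ha h₄ h₂ h₂₄ (card_edgesOf_inter_le_one ha h₁ h₄ h₁₄)))
    (three_le_card_of_mem_edgesOf
      (edgesOf_inter _ T₄ ▸ mem_inter.2 ⟨hsub' (mem_union_right _ hz₃), hz₄⟩)
      (edgesOf_inter _ T₄ ▸ mem_inter.2 ⟨hsub' (mem_union_left _ (mem_union_left _ hw₁)), hw₄⟩)
      hzw)
  rw [h₁.excess_eq_zero] at hmerge₂
  have hcard := card_le_card (subset_union_right (s₁ := T₁ ∪ T₂ ∪ T₃) (s₂ := T₄))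
  have := card_union_le (T₁ ∪ T₂ ∪ T₃) T₄
  have := card_union_le (T₁ ∪ T₂) T₃
  have := card_union_le T₁ T₂
  have := h₄.three_le_card
  have := h₁.card_le
  have := h₂.card_le
  have := h₃.card_le
  have := h₄.card_le
  have := ha.excess_nonpos
    ((union_subset_union_left hsub').trans (edgesOf_union_subset _ T₄)) (by lia) (by lia)
  push_cast at hmerge₂ hmerge₃ hmerge₄
  lia

lemma hasNoShortBergeCycle (ha : HasNoExcess a P d) (hd : 3 * P < d) :
    HasNoShortBergeCycle fun T : {T // IsCritical a P d T} ↦ edgesOf T.1 where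
  linear {T₁ T₂ _ _} hxy hx₁ hy₁ hx₂ hy₂ :=
    Subtype.ext (eq_of_mem_edgesOf ha T₁.2 T₂.2 hxy hx₁ hy₁ hx₂ hy₂)
  no_triangle {T₁ T₂ T₃ _ _ _} h₁₂ h₂₃ h₁₃ _ hyz _ :=
    no_triangle ha (by lia) T₁.2 T₂.2 T₃.2 (Subtype.coe_ne_coe.2 h₁₂) (Subtype.coe_ne_coe.2 h₂₃)
      (Subtype.coe_ne_coe.2 h₁₃) hyz
  no_quadrilateral {T₁ T₂ T₃ T₄ _ _ _ _} h₁₂ h₁₃ h₁₄ h₂₃ h₂₄ h₃₄ _ _ _ _ _ hzw :=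
    no_quadrilateral ha hd T₁.2 T₂.2 T₃.2 T₄.2 (Subtype.coe_ne_coe.2 h₁₂)
      (Subtype.coe_ne_coe.2 h₁₃) (Subtype.coe_ne_coe.2 h₁₄) (Subtype.coe_ne_coe.2 h₂₃)
      (Subtype.coe_ne_coe.2 h₂₄) (Subtype.coe_ne_coe.2 h₃₄) hzw

end IsCritical

end Critical

lemma HasNoShortBergeCycle.mono {V I : Type*} {e e' : I → Finset V} (h : HasNoShortBergeCycle e')
    (hsub : ∀ i, e i ⊆ e' i) : HasNoShortBergeCycle e where
  linear huv hui hvi huj hvj := h.linear huv (hsub _ hui) (hsub _ hvi) (hsub _ huj) (hsub _ hvj)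
  no_triangle hij hjl hil hxy hyz hxz hxi hxj hyj hyl hzl hzi :=
    h.no_triangle hij hjl hil hxy hyz hxz (hsub _ hxi) (hsub _ hxj) (hsub _ hyj) (hsub _ hyl)
      (hsub _ hzl) (hsub _ hzi)
  no_quadrilateral hij hil him hjl hjm hlm hxy hxz hxw hyz hyw hzw hxi hxj hyj hyl hzl hzm hwm
      hwi :=
    h.no_quadrilateral hij hil him hjl hjm hlm hxy hxz hxw hyz hyw hzw (hsub _ hxi) (hsub _ hxj)
      (hsub _ hyj) (hsub _ hyl) (hsub _ hzl) (hsub _ hzm) (hsub _ hwm) (hsub _ hwi)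

section MergingColorings

variable {E α β I : Type*} [DecidableEq E] [DecidableEq α] {a : E → α} {F : Finset E}

/-- The elements of `F` whose color occurs more than once in `F`. -/
def repeated (a : E → α) (F : Finset E) : Finset E := {x ∈ F | ∃ y ∈ F, y ≠ x ∧ a y = a x}

lemma repeated_subset (a : E → α) (F : Finset E) : repeated a F ⊆ F := filter_subset _ _

lemma mem_repeated {x : E} : x ∈ repeated a F ↔ x ∈ F ∧ ∃ y ∈ F, y ≠ x ∧ a y = a x := mem_filter

lemma exists_ne_of_mem_repeated {x : E} (hx : x ∈ repeated a F) :
    ∃ y ∈ repeated a F, y ≠ x ∧ a y = a x := by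
  obtain ⟨hxF, y, hyF, hne, heq⟩ := mem_repeated.1 hx
  exact ⟨y, mem_repeated.2 ⟨hyF, x, hxF, hne.symm, heq.symm⟩, hne, heq⟩

lemma deficiency_le_deficiency_repeated (a : E → α) (F : Finset E) :
    deficiency a F ≤ deficiency a (repeated a F) := by
  obtain ⟨R, hRF, hRcard, hR⟩ := exists_card_eq_deficiency (a := a) (empty_subset F) (by simp)
  have hpartner : ∀ x ∈ R, x ∈ repeated a F ∧ ∃ y ∈ repeated a F \ R, a y = a x := by
    intro x hx
    have hxF := sdiff_subset (hRF hx)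
    obtain ⟨y, hy, hxy⟩ := hR x hx
    obtain ⟨hyF, hyR⟩ := mem_sdiff.1 hy
    have hne : y ≠ x := fun h ↦ hyR (h ▸ hx)
    exact ⟨mem_repeated.2 ⟨hxF, y, hyF, hne, hxy.symm⟩,
      y, mem_sdiff.2 ⟨mem_repeated.2 ⟨hyF, x, hxF, hne.symm, hxy⟩, hyR⟩, hxy.symm⟩
  have himage : (repeated a F).image a ⊆ (repeated a F \ R).image a := by
    refine image_subset_iff.2 fun x hx ↦ ?_
    by_cases hxR : x ∈ R
    · exact mem_image.2 (hpartner x hxR).2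
    · exact mem_image_of_mem a (mem_sdiff.2 ⟨hx, hxR⟩)
  have hcard := (card_le_card himage).trans card_image_le
  rw [card_sdiff_of_subset fun x hx ↦ (hpartner x hx).1] at hcard
  have hRle := card_le_card fun x hx ↦ (hpartner x hx).1
  have := deficiency_add_card_image a (repeated a F)
  lia

variable [Fintype E] [Fintype β] [Nonempty β]

section

variable [DecidableEq β]

/-- The patterns which a second coloring has to avoid in order to separate two elements of `F`
having the same color under `a`: they are constant on the color classes of `a` in `repeated a F`,
and normalized to an arbitrary value elsewhere. -/
noncomputable def mergingColorings (β : Type*) [Fintype β] [DecidableEq β] [Nonempty β]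
    (a : E → α) (F : Finset E) : Finset (E → β) :=
  {f | (∀ x ∉ repeated a F, f x = Classical.arbitrary β) ∧
    ∀ x ∈ repeated a F, ∀ y ∈ repeated a F, a x = a y → f x = f y}

lemma mem_mergingColorings {f : E → β} :
    f ∈ mergingColorings β a F ↔ (∀ x ∉ repeated a F, f x = Classical.arbitrary β) ∧
      ∀ x ∈ repeated a F, ∀ y ∈ repeated a F, a x = a y → f x = f y := by
  simp [mergingColorings]

lemma mergingColorings_ext {f f' : E → β} (hf : f ∈ mergingColorings β a F)
    (hf' : f' ∈ mergingColorings β a F) (h : ∀ x ∈ repeated a F, f x = f' x) : f = f' := by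
  funext x
  by_cases hx : x ∈ repeated a F
  · exact h x hx
  · rw [(mem_mergingColorings.1 hf).1 x hx, (mem_mergingColorings.1 hf').1 x hx]

lemma mergingColorings_ext_of_erase {f f' : E → β} (hf : f ∈ mergingColorings β a F)
    (hf' : f' ∈ mergingColorings β a F) {v : E} (hv : v ∈ repeated a F)
    (h : ∀ x ∈ repeated a F, x ≠ v → f x = f' x) : f = f' := by
  refine mergingColorings_ext hf hf' fun x hx ↦ ?_
  by_cases hxv : x = v
  · subst hxv
    obtain ⟨y, hy, hne, heq⟩ := exists_ne_of_mem_repeated hx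
    rw [← (mem_mergingColorings.1 hf).2 y hy x hx heq,
      ← (mem_mergingColorings.1 hf').2 y hy x hx heq, h y hy hne]
  · exact h x hx hxv

lemma card_mergingColorings_eq_le (a : E → α) (F : Finset E) {v : E} (hv : v ∈ repeated a F)
    (c : β) : ((mergingColorings β a F).filter (· v = c)).card ≤
      Fintype.card β ^ (((repeated a F).image a).card - 1) := by
  have hrep : ∀ t : ((repeated a F).image a).erase (a v), ∃ x ∈ repeated a F, a x = t :=
    fun t ↦ mem_image.1 (mem_of_mem_erase t.2)
  choose rep hmem hcolor using hrep
  have hcard : (univ : Finset (((repeated a F).image a).erase (a v) → β)).card =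
      Fintype.card β ^ (((repeated a F).image a).card - 1) := by
    simp [card_erase_of_mem (mem_image_of_mem a hv)]
  refine hcard ▸ card_le_card_of_injOn (fun f t ↦ f (rep t)) (fun _ _ ↦ mem_coe.2 (mem_univ _))
    fun f hf f' hf' heq ↦ ?_
  obtain ⟨hf, hfv⟩ := mem_filter.1 hf
  obtain ⟨hf', hfv'⟩ := mem_filter.1 hf'
  have hconst := (mem_mergingColorings.1 hf).2
  have hconst' := (mem_mergingColorings.1 hf').2
  refine mergingColorings_ext hf hf' fun x hx ↦ ?_
  by_cases hxv : a x = a v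
  · rw [hconst x hx v hv hxv, hconst' x hx v hv hxv, hfv, hfv']
  · set t : ((repeated a F).image a).erase (a v) :=
      ⟨a x, mem_erase.2 ⟨hxv, mem_image_of_mem a hx⟩⟩
    rw [hconst x hx _ (hmem t) (hcolor t).symm, hconst' x hx _ (hmem t) (hcolor t).symm]
    exact congrFun heq t

lemma card_mergingColorings_mul_le (a : E → α) (F : Finset E) {v : E} (hv : v ∈ repeated a F)
    (c : β) : (((mergingColorings β a F).filter (· v = c)).card : ℝ) *
      (1 / (Fintype.card β : ℝ)) ^ ((repeated a F).card - 1) ≤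
        (1 / (Fintype.card β : ℝ)) ^ deficiency a F := by
  have hβ : (1 : ℝ) ≤ Fintype.card β := by exact_mod_cast Fintype.card_pos (α := β)
  have himage : 0 < ((repeated a F).image a).card := card_pos.2 ⟨_, mem_image_of_mem a hv⟩
  have hexp : (repeated a F).card - 1 =
      deficiency a (repeated a F) + (((repeated a F).image a).card - 1) := by
    have := deficiency_add_card_image a (repeated a F)
    lia
  calc (((mergingColorings β a F).filter (· v = c)).card : ℝ) *
        (1 / (Fintype.card β : ℝ)) ^ ((repeated a F).card - 1)
      ≤ (Fintype.card β : ℝ) ^ (((repeated a F).image a).card - 1) *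
          (1 / (Fintype.card β : ℝ)) ^ ((repeated a F).card - 1) := by
        gcongr
        exact_mod_cast card_mergingColorings_eq_le a F hv c
    _ = (1 / (Fintype.card β : ℝ)) ^ deficiency a (repeated a F) := by
        rw [hexp, pow_add, mul_left_comm, ← mul_pow, mul_one_div_cancel (by positivity), one_pow,
          mul_one]
    _ ≤ _ := pow_le_pow_of_le_one (by positivity) ((div_le_one (by positivity)).2 hβ)
        (deficiency_le_deficiency_repeated a F)

/-- The constraint system whose solutions separate, in each `F i`, two elements having the same
color under `a`. -/
noncomputable def mergingSystem (β : Type*) [Fintype β] [DecidableEq β] [Nonempty β] (a : E → α)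
    {F : I → Finset E} (hF : HasNoShortBergeCycle F) (hpos : ∀ i, 0 < deficiency a (F i)) :
    ConflictSystem E I β where
  edge i := repeated a (F i)
  forbidden i := mergingColorings β a (F i)
  two_le_card i := by
    by_contra! hlt
    have := deficiency_le_of_card_le a (k := 0) (Nat.le_of_lt_succ hlt)
    have := deficiency_le_deficiency_repeated a (F i)
    have := hpos i
    lia
  noShortCycle := hF.mono fun i ↦ repeated_subset a (F i)
  rigid _ _ hf _ hf' _ hv h := mergingColorings_ext_of_erase hf hf' hv h

end

theorem exists_coloring_separating [Fintype I] {F : I → Finset E} {k σ : ℕ} {lam ζ : ℝ}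
    (hF : HasNoShortBergeCycle F) (hpos : ∀ i, 0 < deficiency a (F i)) (hk : ∀ i, (F i).card ≤ k)
    (hζ : 1 ≤ ζ)
    (hlam : ∀ v, ∑ i with v ∈ F i, (1 / (Fintype.card β : ℝ)) ^ deficiency a (F i) ≤ lam)
    (hσ : 16 * σ * ζ ≤ Fintype.card β) (hmass : 2 * (Fintype.card E : ℝ) ≤ Real.exp (σ / 2))
    (hgrowth : 2 * (Fintype.card E : ℝ) * Fintype.card β * Real.exp (4 ^ (k + 1) * σ * lam) ≤
      ζ ^ σ) :
    ∃ b : E → β, ∀ i, ∃ x ∈ F i, ∃ y ∈ F i, a x = a y ∧ b x ≠ b y := by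
  classical
  set S := mergingSystem β a hF hpos
  have hweight : ∀ v c, ∑ i with v ∈ S.edge i,
      S.condWeight (fun _ _ ↦ 1 / (Fintype.card β : ℝ)) i v c ≤ lam := by
    intro v c
    refine (sum_le_sum (g := fun i ↦ (1 / (Fintype.card β : ℝ)) ^ deficiency a (F i))
      fun i hi ↦ ?_).trans ((sum_le_sum_of_subset_of_nonneg ?_ ?_).trans (hlam v))
    · have hv : v ∈ repeated a (F i) := (mem_filter.1 hi).2
      simpa [ConflictSystem.condWeight, S, mergingSystem, card_erase_of_mem hv] using
        card_mergingColorings_mul_le a (F i) hv c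
    · exact monotone_filter_right _ fun i _ hi ↦ repeated_subset a (F i) hi
    · exact fun i _ _ ↦ by positivity
  obtain ⟨b, hb⟩ := S.exists_coloring_avoiding_forbidden
    (fun i ↦ (card_le_card (repeated_subset a (F i))).trans (hk i)) hζ hweight hσ hmass hgrowth
  refine ⟨b, fun i ↦ ?_⟩
  by_contra! hmerge
  have hforbidden : (fun x ↦ if x ∈ repeated a (F i) then b x else Classical.arbitrary β) ∈
      mergingColorings β a (F i) := by
    refine mem_mergingColorings.2 ⟨fun x hx ↦ if_neg hx, fun x hx y hy hxy ↦ ?_⟩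
    rw [if_pos hx, if_pos hy]
    exact hmerge x (repeated_subset a _ hx) y (repeated_subset a _ hy) hxy
  obtain ⟨z, hz, hne⟩ := hb i _ hforbidden
  exact hne (if_pos hz).symm

end MergingColorings

lemma card_sym2_le_sq {W : Type*} [Fintype W] : Fintype.card (Sym2 W) ≤ Fintype.card W ^ 2 := by
  rw [sq, ← Fintype.card_prod]
  exact Fintype.card_le_of_surjective (fun x ↦ s(x.1, x.2)) (Quot.mk_surjective)

section Cliques

variable {W : Type} [DecidableEq W]

lemma card_edgesOf_le_sq {U : Finset W} {k : ℕ} (h : U.card ≤ k) : (edgesOf U).card ≤ k ^ 2 := by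
  rw [card_edgesOf]
  exact (Nat.choose_le_pow _ _).trans (Nat.pow_le_pow_left h 2)

lemma biUnion_toFinset_edgesOf {U : Finset W} (hU : 2 ≤ U.card) :
    (edgesOf U).biUnion Sym2.toFinset = U := by
  ext v
  simp only [mem_biUnion, Sym2.mem_toFinset]
  constructor
  · rintro ⟨e, he, hv⟩
    exact mem_sym2_iff.1 (mem_filter.1 he).1 v hv
  · intro hv
    obtain ⟨w, hw, hne⟩ := exists_mem_ne hU v
    exact ⟨s(v, w), mk_mem_edgesOf.2 ⟨hv, hw, hne.symm⟩, Sym2.mem_mk_left _ _⟩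

lemma edgesOf_injOn : Set.InjOn edgesOf {U : Finset W | 2 ≤ U.card} := fun U hU U' hU' h ↦ by
  rw [← biUnion_toFinset_edgesOf hU, h, biUnion_toFinset_edgesOf hU']

variable [Fintype W]

lemma card_filter_mem_edgesOf_le (g : Sym2 W) (j : ℕ) :
    ({U | U.card = j ∧ g ∈ edgesOf U} : Finset (Finset W)).card ≤ Fintype.card W ^ (j - 2) := by
  induction g using Sym2.ind with | _ x y => ?_
  refine le_trans ?_ (Nat.choose_le_pow (Fintype.card W) (j - 2))
  rw [← card_univ, ← card_powersetCard]
  have hpair : ∀ {U : Finset W}, s(x, y) ∈ edgesOf U → {x, y} ⊆ U := fun h ↦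
    insert_subset (mk_mem_edgesOf.1 h).1 (singleton_subset_iff.2 (mk_mem_edgesOf.1 h).2.1)
  refine card_le_card_of_injOn (fun U ↦ U \ {x, y}) (fun U hU ↦ ?_) fun U hU U' hU' h ↦ ?_
  · obtain ⟨hcard, hmem⟩ := (mem_filter.1 hU).2
    refine mem_powersetCard.2 ⟨subset_univ _, ?_⟩
    rw [card_sdiff_of_subset (hpair hmem), card_pair (mk_mem_edgesOf.1 hmem).2.2, hcard]
  · rw [← sdiff_union_of_subset (hpair (mem_filter.1 hU).2.2),
      ← sdiff_union_of_subset (hpair (mem_filter.1 hU').2.2)]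
    exact congrArg (· ∪ {x, y}) h

/-- The edge sets of the cliques on at least three and at most `k` vertices. -/
def smallCliques (W : Type) [DecidableEq W] [Fintype W] (k : ℕ) : Finset (Finset (Sym2 W)) :=
  ({U | 3 ≤ U.card ∧ U.card ≤ k} : Finset (Finset W)).image edgesOf

/-- The edge sets of the cliques on `j` vertices containing the edge `g`. -/
def cliquesThrough (g : Sym2 W) (j : ℕ) : Finset (Finset (Sym2 W)) :=
  ({U | U.card = j ∧ g ∈ edgesOf U} : Finset (Finset W)).image edgesOf

lemma card_cliquesThrough_le (g : Sym2 W) (j : ℕ) :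
    (cliquesThrough g j).card ≤ Fintype.card W ^ (j - 2) :=
  card_image_le.trans (card_filter_mem_edgesOf_le g j)

/-- Bounds the number of ways in which the edges of a clique on at most `k` vertices can repeat
colors; it is `(4 * e) ^ e` for `e = k ^ 2`. -/
def patternBound (k : ℕ) : ℝ := (4 * (k ^ 2 : ℕ) : ℝ) ^ (k ^ 2)

lemma one_le_patternBound (k : ℕ) : 1 ≤ patternBound k := by
  rcases k.eq_zero_or_pos with rfl | hk
  · simp [patternBound]
  · refine one_le_pow₀ ?_
    exact_mod_cast (by nlinarith [Nat.pow_pos hk (n := 2)] : 1 ≤ 4 * k ^ 2)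

lemma patternBound_pos (k : ℕ) : 0 < patternBound k := one_pos.trans_le (one_le_patternBound k)

lemma isLocallySparse_smallCliques {α : Type*} [Fintype α] {k : ℕ} {ρ : ℕ → ℕ}
    (hsum : ∑ j ∈ Icc 3 k, (Fintype.card W : ℝ) ^ (j - 2) *
      (patternBound k * (1 / (Fintype.card α : ℝ)) ^ (ρ j + 1)) ≤ 1 / 2) :
    IsLocallySparse α (smallCliques W k) fun F ↦ ρ (F.biUnion Sym2.toFinset).card := by
  intro g
  refine le_trans ?_ hsum
  set 𝒯 : Finset (Finset W) := {U | (3 ≤ U.card ∧ U.card ≤ k) ∧ g ∈ edgesOf U}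
  have hcliques : {F ∈ smallCliques W k | g ∈ F} = 𝒯.image edgesOf := by
    rw [smallCliques, filter_image, filter_filter]
  have h𝒯 : ∀ U ∈ 𝒯, 3 ≤ U.card ∧ U.card ≤ k := fun U hU ↦ (mem_filter.1 hU).2.1
  rw [hcliques, sum_image (edgesOf_injOn.mono fun U hU ↦ Nat.le_of_succ_le (h𝒯 U hU).1),
    ← sum_fiberwise_of_maps_to fun U hU ↦ mem_Icc.2 (h𝒯 U hU)]
  refine sum_le_sum fun j _ ↦ ?_
  have hterm : ∀ U ∈ {U ∈ 𝒯 | U.card = j}, (4 * (edgesOf U).card : ℝ) ^ (edgesOf U).card *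
        (1 / (Fintype.card α : ℝ)) ^ (ρ ((edgesOf U).biUnion Sym2.toFinset).card + 1) ≤
      patternBound k * (1 / (Fintype.card α : ℝ)) ^ (ρ j + 1) := by
    intro U hU
    obtain ⟨hU𝒯, rfl⟩ := mem_filter.1 hU
    rw [biUnion_toFinset_edgesOf (Nat.le_of_succ_le (h𝒯 U hU𝒯).1)]
    refine mul_le_mul_of_nonneg_right ?_ (by positivity)
    unfold patternBound
    exact_mod_cast monotone_mul_pow_self four_pos (card_edgesOf_le_sq (h𝒯 U hU𝒯).2)
  refine (sum_le_card_nsmul _ _ _ hterm).trans ?_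
  rw [nsmul_eq_mul]
  have hpos := patternBound_pos k
  gcongr
  exact_mod_cast (card_le_card fun U hU ↦ by grind).trans (card_filter_mem_edgesOf_le g j)

end Cliques

section TwoColorings

variable {W : Type} {α : Type*} [DecidableEq W] [DecidableEq α] {a : Sym2 W → α} {P d : ℕ}

/-- The number of repetitions on a critical set of `j` vertices, rounded up for those `j` which
cannot occur. -/
def criticalDeficiency (P d j : ℕ) : ℕ := (d * (j - 2)) ⌈/⌉ P

lemma IsCritical.mul_deficiency_eq {T : Finset W} (hT : IsCritical a P d T) :
    P * deficiency a (edgesOf T) = d * (T.card - 2) := by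
  have hzero := hT.excess_eq_zero
  have := hT.three_le_card
  zify [show 2 ≤ T.card by lia]
  unfold excess at hzero
  linear_combination hzero

lemma IsCritical.deficiency_eq {T : Finset W} (hT : IsCritical a P d T) :
    deficiency a (edgesOf T) = criticalDeficiency P d T.card := by
  have hP : 0 < P := by
    have := hT.three_le_card
    have := hT.card_le
    lia
  rw [criticalDeficiency, ← hT.mul_deficiency_eq, ← smul_eq_mul, smul_ceilDiv hP]

/-- Each edge `v` lies in at most `m j` critical sets of `j` vertices. -/
def HasCriticalDegreeLE (a : Sym2 W → α) (P d : ℕ) (m : ℕ → ℕ) : Prop :=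
  ∀ v j, ∀ 𝒯 : Finset (Finset W),
    (∀ T ∈ 𝒯, IsCritical a P d T ∧ T.card = j ∧ v ∈ edgesOf T) → 𝒯.card ≤ m j

lemma hasNoExcess_of_deficiency_le (ha : ∀ U : Finset W, 3 ≤ U.card → U.card ≤ 4 * (P + 2) →
    deficiency a (edgesOf U) ≤ d * (U.card - 2) / P) : HasNoExcess a P d := by
  intro U hU hUP
  have hmul := (Nat.mul_le_mul_left P (ha U hU hUP)).trans (Nat.mul_div_le _ P)
  zify [show 2 ≤ U.card by lia] at hmul
  unfold excess
  linear_combination hmul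

/-- Critical sets through a common edge have no other edge in common. -/
lemma HasNoExcess.hasCriticalDegreeLE (ha : HasNoExcess a P d) {m : ℕ → ℕ} [Fintype W]
    (hfew : ∀ v, ∀ j ∈ Icc 3 (P + 2), ∀ 𝒮 ⊆ cliquesThrough v j, 𝒮.card = m j →
      (∀ S ∈ 𝒮, ∀ S' ∈ 𝒮, S ≠ S' → S ∩ S' ⊆ {v}) →
        ∃ S ∈ 𝒮, deficiency a S < criticalDeficiency P d j) :
    HasCriticalDegreeLE a P d m := by
  intro v j 𝒯 h𝒯
  by_contra! hlt
  obtain ⟨T₀, hT₀⟩ : 𝒯.Nonempty := card_pos.1 (by lia)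
  obtain ⟨hcrit₀, hj, -⟩ := h𝒯 T₀ hT₀
  obtain ⟨𝒯', hsub, hcard⟩ := exists_subset_card_eq hlt.le
  have hinj : Set.InjOn edgesOf 𝒯' := edgesOf_injOn.mono fun T hT ↦
    Nat.le_of_succ_le (h𝒯 T (hsub hT)).1.three_le_card
  have hinter : ∀ S ∈ 𝒯'.image edgesOf, ∀ S' ∈ 𝒯'.image edgesOf, S ≠ S' → S ∩ S' ⊆ {v} := by
    simp only [forall_mem_image]
    intro T hT T' hT' hne z hz
    obtain ⟨hcrit, -, hv⟩ := h𝒯 T (hsub hT)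
    obtain ⟨hcrit', -, hv'⟩ := h𝒯 T' (hsub hT')
    have hcard := hcrit.card_edgesOf_inter_le_one ha hcrit' fun h ↦ hne (congrArg edgesOf h)
    exact mem_singleton.2 (card_le_one.1 hcard z hz v (mem_inter.2 ⟨hv, hv'⟩))
  obtain ⟨S, hS, hdef⟩ := hfew v j (mem_Icc.2 (hj ▸ ⟨hcrit₀.three_le_card, hcrit₀.card_le⟩))
    (𝒯'.image edgesOf)
    (image_subset_image fun T hT ↦ by simpa using (h𝒯 T (hsub hT)).2)
    (by rw [card_image_of_injOn hinj, hcard]) hinter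
  obtain ⟨T, hT, rfl⟩ := mem_image.1 hS
  obtain ⟨hcrit, rfl, -⟩ := h𝒯 T (hsub hT)
  exact hdef.ne hcrit.deficiency_eq

theorem exists_coloring_hasNoExcess [Fintype W] [Fintype α] [Nonempty α] {m : ℕ → ℕ}
    (hsparse : ∑ j ∈ Icc 3 (4 * (P + 2)), (Fintype.card W : ℝ) ^ (j - 2) *
      (patternBound (4 * (P + 2)) * (1 / (Fintype.card α : ℝ)) ^ (d * (j - 2) / P + 1)) ≤ 1 / 2)
    (hfew : (Fintype.card W : ℝ) ^ 2 * ∑ j ∈ Icc 3 (P + 2),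
      ((Fintype.card W ^ (j - 2)).choose (m j) : ℝ) * (patternBound (P + 2) *
        (1 / (Fintype.card α : ℝ)) ^ criticalDeficiency P d j) ^ m j < 1) :
    ∃ a : Sym2 W → α, HasNoExcess a P d ∧ HasCriticalDegreeLE a P d m := by
  have hsum : ∑ t : Sym2 W × Icc 3 (P + 2), ((cliquesThrough t.1 t.2.1).card.choose (m t.2) : ℝ) *
      (patternBound (P + 2) * (1 / (Fintype.card α : ℝ)) ^ criticalDeficiency P d t.2) ^ m t.2 <
        1 := by
    have hpos := patternBound_pos (P + 2)
    refine lt_of_le_of_lt ?_ hfew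
    rw [Fintype.sum_prod_type, ← sum_coe_sort (Icc 3 (P + 2))]
    have hedge : ∀ g : Sym2 W, ∑ j : Icc 3 (P + 2), ((cliquesThrough g j.1).card.choose (m j) : ℝ) *
          (patternBound (P + 2) * (1 / (Fintype.card α : ℝ)) ^ criticalDeficiency P d j) ^ m j ≤
        ∑ j : Icc 3 (P + 2), ((Fintype.card W ^ (j.1 - 2)).choose (m j) : ℝ) *
          (patternBound (P + 2) * (1 / (Fintype.card α : ℝ)) ^ criticalDeficiency P d j) ^ m j := by
      intro g
      gcongr with j
      exact card_cliquesThrough_le g j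
    refine (sum_le_card_nsmul _ _ _ fun g _ ↦ hedge g).trans ?_
    rw [nsmul_eq_mul]
    refine mul_le_mul_of_nonneg_right ?_ (sum_nonneg fun _ _ ↦ by positivity)
    exact_mod_cast card_sym2_le_sq
  have hthrough : ∀ t : Sym2 W × Icc 3 (P + 2), ∀ S ∈ cliquesThrough t.1 t.2,
      t.1 ∈ S ∧ S.card ≤ (P + 2) ^ 2 := by
    intro t S hS
    obtain ⟨U, hU, rfl⟩ := mem_image.1 hS
    obtain ⟨hcard, hmem⟩ := (mem_filter.1 hU).2
    exact ⟨hmem, card_edgesOf_le_sq (hcard.trans_le (mem_Icc.1 t.2.2).2)⟩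
  obtain ⟨a, hsmall, hfew⟩ := exists_coloring_deficiency_le
    (isLocallySparse_smallCliques (ρ := fun j ↦ d * (j - 2) / P) hsparse) hthrough hsum
  have ha : HasNoExcess a P d := hasNoExcess_of_deficiency_le fun U hU hUP ↦ by
    simpa [biUnion_toFinset_edgesOf (Nat.le_of_succ_le hU)] using
      hsmall (edgesOf U) (mem_image_of_mem edgesOf (by simp [hU, hUP]))
  exact ⟨a, ha, ha.hasCriticalDegreeLE fun v j hj ↦ hfew (v, ⟨j, hj⟩)⟩

lemma HasCriticalDegreeLE.sum_pow_le [Fintype {T // IsCritical a P d T}] {m : ℕ → ℕ}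
    (hm : HasCriticalDegreeLE a P d m) {y : ℝ} (hy : 0 ≤ y) (v : Sym2 W) :
    ∑ T : {T // IsCritical a P d T} with v ∈ edgesOf T.1, y ^ deficiency a (edgesOf T.1) ≤
      ∑ j ∈ Icc 3 (P + 2), m j * y ^ criticalDeficiency P d j := by
  have hmaps : ∀ T ∈ ({T | v ∈ edgesOf T.1} : Finset {T // IsCritical a P d T}),
      T.1.card ∈ Icc 3 (P + 2) := fun T _ ↦ mem_Icc.2 ⟨T.2.three_le_card, T.2.card_le⟩
  rw [← sum_fiberwise_of_maps_to hmaps]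
  refine sum_le_sum fun j _ ↦ ?_
  have hterm : ∀ T ∈ {T ∈ ({T | v ∈ edgesOf T.1} : Finset {T // IsCritical a P d T}) |
      T.1.card = j}, y ^ deficiency a (edgesOf T.1) = y ^ criticalDeficiency P d j :=
    fun T hT ↦ by rw [T.2.deficiency_eq, (mem_filter.1 hT).2]
  rw [sum_congr rfl hterm, sum_const, nsmul_eq_mul]
  gcongr
  rw [← card_map (Function.Embedding.subtype _)]
  refine mod_cast hm v j _ fun U hU ↦ ?_
  obtain ⟨T, hT, rfl⟩ := mem_map.1 hU
  rw [filter_filter, mem_filter] at hT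
  exact ⟨T.2, hT.2.2, hT.2.1⟩

theorem exists_coloring_separating_isCritical [Fintype W] {β : Type*} [Fintype β] [Nonempty β]
    (ha : HasNoExcess a P d) (hd : 3 * P < d) {m : ℕ → ℕ} (hm : HasCriticalDegreeLE a P d m)
    {σ : ℕ} {lam ζ : ℝ} (hζ : 1 ≤ ζ)
    (hlam : ∑ j ∈ Icc 3 (P + 2),
      m j * (1 / (Fintype.card β : ℝ)) ^ criticalDeficiency P d j ≤ lam)
    (hσ : 16 * σ * ζ ≤ Fintype.card β) (hmass : 2 * (Fintype.card W : ℝ) ^ 2 ≤ Real.exp (σ / 2))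
    (hgrowth : 2 * (Fintype.card W : ℝ) ^ 2 * Fintype.card β *
      Real.exp (4 ^ ((P + 2) ^ 2 + 1) * σ * lam) ≤ ζ ^ σ) :
    ∃ b : Sym2 W → β, ∀ T, IsCritical a P d T →
      ∃ x ∈ edgesOf T, ∃ y ∈ edgesOf T, a x = a y ∧ b x ≠ b y := by
  classical
  have hcard : (Fintype.card (Sym2 W) : ℝ) ≤ (Fintype.card W : ℝ) ^ 2 := by
    exact_mod_cast card_sym2_le_sq
  have hpos : ∀ T : {T // IsCritical a P d T}, 0 < deficiency a (edgesOf T.1) := fun T ↦ by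
    have := T.2.three_le_card
    refine Nat.pos_of_mul_pos_left (a := P) ?_
    rw [T.2.mul_deficiency_eq]
    exact Nat.mul_pos (by lia) (by lia)
  obtain ⟨b, hb⟩ := exists_coloring_separating (β := β) (IsCritical.hasNoShortBergeCycle ha hd)
    hpos (fun T ↦ card_edgesOf_le_sq T.2.card_le) hζ
    (fun v ↦ (hm.sum_pow_le (by positivity) v).trans hlam) hσ
    ((mul_le_mul_of_nonneg_left hcard zero_le_two).trans hmass) (le_trans (by gcongr) hgrowth)
  exact ⟨b, fun T hT ↦ hb ⟨T, hT⟩⟩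

end TwoColorings

section ProductColoring

variable {E α β : Type*} [DecidableEq α] [DecidableEq β]

lemma image_fst_image_prodMk (a : E → α) (b : E → β) (F : Finset E) :
    (F.image fun z ↦ (a z, b z)).image Prod.fst = F.image a := by
  rw [image_image]
  rfl

lemma card_image_le_card_image_prodMk (a : E → α) (b : E → β) (F : Finset E) :
    (F.image a).card ≤ (F.image fun z ↦ (a z, b z)).card := by
  rw [← image_fst_image_prodMk a b]
  exact card_image_le

lemma card_image_lt_card_image_prodMk {a : E → α} {b : E → β} {F : Finset E} {x y : E}
    (hx : x ∈ F) (hy : y ∈ F) (hxy : a x = a y) (hne : b x ≠ b y) :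
    (F.image a).card < (F.image fun z ↦ (a z, b z)).card := by
  rw [← image_fst_image_prodMk a b]
  refine card_image_le.lt_of_ne fun h ↦ hne ?_
  exact congrArg Prod.snd (card_image_iff.1 h (mem_image_of_mem _ hx) (mem_image_of_mem _ hy) hxy)

lemma genRamsey_le_mul_of_coloring {n p q A B : ℕ} {c : Sym2 (Fin n) → Fin A × Fin B}
    (hc : ∀ S : Finset (Fin n), S.card = p → q ≤ ((edgesOf S).image c).card) :
    genRamsey n p q ≤ A * B := by
  refine Nat.sInf_le ⟨finProdFinEquiv ∘ c, fun S hS ↦ ?_⟩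
  rw [← image_image, card_image_of_injective _ finProdFinEquiv.injective]
  exact hc S hS

theorem genRamsey_le_mul {n P d q A B : ℕ} [NeZero A] [NeZero B] (hP : 1 ≤ P) (hd : 3 * P < d)
    (hq : q + d = (P + 2).choose 2 + 1) {m : ℕ → ℕ}
    (hsparse : ∑ j ∈ Icc 3 (4 * (P + 2)), (n : ℝ) ^ (j - 2) *
      (patternBound (4 * (P + 2)) * (1 / (A : ℝ)) ^ (d * (j - 2) / P + 1)) ≤ 1 / 2)
    (hfew : (n : ℝ) ^ 2 * ∑ j ∈ Icc 3 (P + 2), ((n ^ (j - 2)).choose (m j) : ℝ) *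
      (patternBound (P + 2) * (1 / (A : ℝ)) ^ criticalDeficiency P d j) ^ m j < 1)
    {σ : ℕ} {lam ζ : ℝ} (hζ : 1 ≤ ζ)
    (hlam : ∑ j ∈ Icc 3 (P + 2), m j * (1 / (B : ℝ)) ^ criticalDeficiency P d j ≤ lam)
    (hσ : 16 * σ * ζ ≤ B) (hmass : 2 * (n : ℝ) ^ 2 ≤ Real.exp (σ / 2))
    (hgrowth : 2 * (n : ℝ) ^ 2 * B * Real.exp (4 ^ ((P + 2) ^ 2 + 1) * σ * lam) ≤ ζ ^ σ) :
    genRamsey n (P + 2) q ≤ A * B := by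
  obtain ⟨a, ha, hm⟩ := exists_coloring_hasNoExcess (W := Fin n) (α := Fin A) (P := P) (d := d)
    (m := m) (by simpa using hsparse) (by simpa using hfew)
  obtain ⟨b, hb⟩ := exists_coloring_separating_isCritical (β := Fin B) ha hd hm (lam := lam) hζ
    (by simpa using hlam) (by simpa using hσ) (by simpa using hmass) (by simpa using hgrowth)
  refine genRamsey_le_mul_of_coloring (c := fun x ↦ (a x, b x)) fun S hS ↦ ?_
  have hadd := deficiency_add_card_image a (edgesOf S)
  rw [card_edgesOf, hS] at hadd
  have hexcess := ha S (by lia) (by lia)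
  have hdef : deficiency a (edgesOf S) ≤ d := by
    refine Nat.le_of_mul_le_mul_left ?_ hP
    rw [excess, hS] at hexcess
    zify
    push_cast at hexcess
    linear_combination hexcess
  rcases hdef.lt_or_eq with hlt | heq
  · have := card_image_le_card_image_prodMk a b (edgesOf S)
    lia
  · obtain ⟨T, hTS, hT⟩ := ha.exists_isCritical_subset (S := S) (by lia) hS.le
      (by rw [excess, heq, hS]; push_cast; ring)
    obtain ⟨x, hx, y, hy, hxy, hne⟩ := hb T hT
    have := card_image_lt_card_image_prodMk (edgesOf_mono hTS hx) (edgesOf_mono hTS hy) hxy hne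
    lia

end ProductColoring

section CriticalDeficiency

variable {P d j : ℕ}

lemma le_mul_criticalDeficiency (hP : 0 < P) : d * (j - 2) ≤ P * criticalDeficiency P d j :=
  le_smul_ceilDiv hP

lemma criticalDeficiency_pos (hP : 0 < P) (hd : 0 < d) (hj : 3 ≤ j) :
    0 < criticalDeficiency P d j :=
  Nat.pos_of_mul_pos_left ((Nat.mul_pos hd (by lia)).trans_le (le_mul_criticalDeficiency hP))

lemma criticalDeficiency_le (hP : 0 < P) (hj : j ≤ P + 2) : criticalDeficiency P d j ≤ d := by
  rw [criticalDeficiency, ceilDiv_le_iff_le_mul hP, mul_comm P]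
  exact Nat.mul_le_mul_left d (by lia)

end CriticalDeficiency

section Asymptotics

open Filter

lemma eventually_mul_rpow_le_exp {c k s b : ℝ} (hc : 0 < c) (hs : 0 < s) (hb : 0 < b) :
    ∀ᶠ x : ℝ in atTop, c * x ^ k ≤ Real.exp (b * x ^ s) := by
  have hlittle := (isLittleO_rpow_exp_pos_mul_atTop (k / s) hb).comp_tendsto
    (tendsto_rpow_atTop hs)
  filter_upwards [hlittle.bound (inv_pos.2 hc), eventually_ge_atTop 0] with x hx hx0
  simp only [Function.comp, Real.norm_eq_abs, Real.abs_exp] at hx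
  rw [← Real.rpow_mul hx0, mul_div_cancel₀ _ hs.ne', abs_of_nonneg (by positivity),
    inv_mul_eq_div, le_div_iff₀ hc] at hx
  linarith

lemma eventually_mul_rpow_neg_le {c s b : ℝ} (hs : 0 < s) (hb : 0 < b) :
    ∀ᶠ x : ℝ in atTop, c * x ^ (-s) ≤ b := by
  have hlim := (tendsto_rpow_neg_atTop hs).const_mul c
  rw [mul_zero] at hlim
  exact (hlim.eventually (gt_mem_nhds hb)).mono fun x hx ↦ hx.le

lemma eventually_mul_log_le_rpow {c s : ℝ} (hc : 0 < c) (hs : 0 < s) :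
    ∀ᶠ x : ℝ in atTop, c * Real.log x ≤ x ^ s := by
  filter_upwards [(isLittleO_log_rpow_atTop hs).bound (inv_pos.2 hc), eventually_ge_atTop 0]
    with x hx hx0
  rw [Real.norm_eq_abs, Real.norm_of_nonneg (by positivity), inv_mul_eq_div,
    le_div_iff₀ hc] at hx
  nlinarith [le_abs_self (Real.log x)]

lemma eventually_one_le_log : ∀ᶠ x : ℝ in atTop, 1 ≤ Real.log x :=
  Real.tendsto_log_atTop.eventually_ge_atTop 1

lemma pow_mul_one_div_pow_le {x A s : ℝ} (hx : 1 ≤ x) (hA : x ^ s ≤ A) (i r : ℕ) :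
    x ^ i * (1 / A) ^ r ≤ x ^ (i - s * r) := by
  have hx0 : 0 < x := by linarith
  have : 0 < x ^ s := by positivity
  rw [Real.rpow_sub hx0, Real.rpow_natCast, Real.rpow_mul hx0.le, Real.rpow_natCast, one_div,
    inv_pow, div_eq_mul_inv]
  gcongr

lemma choose_mul_pow_le_exp_neg {N m : ℕ} {x : ℝ} (hx : 0 ≤ x) (h : 9 * (N * x) ≤ m) :
    (N.choose m : ℝ) * x ^ m ≤ Real.exp (-m) := by
  have hexp : Real.exp 2 ≤ 9 := by
    have := Real.exp_one_lt_three.le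
    calc Real.exp 2 = Real.exp 1 ^ 2 := by rw [← Real.exp_nat_mul]; norm_num
      _ ≤ 3 ^ 2 := by gcongr
      _ = 9 := by norm_num
  calc (N.choose m : ℝ) * x ^ m ≤ (N : ℝ) ^ m / m.factorial * x ^ m := by
        gcongr
        exact Nat.choose_le_pow_div m N
    _ = (N * x) ^ m / m.factorial := by rw [mul_pow]; ring
    _ ≤ (m / Real.exp 2) ^ m / m.factorial := by
        gcongr
        rw [le_div_iff₀ (Real.exp_pos 2)]
        nlinarith [mul_nonneg N.cast_nonneg hx]
    _ = Real.exp (-2) ^ m * ((m : ℝ) ^ m / m.factorial) := by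
        rw [Real.exp_neg, div_pow, inv_pow]; ring
    _ ≤ Real.exp (-2) ^ m * Real.exp m := by
        gcongr
        exact Real.pow_div_factorial_le_exp m m.cast_nonneg m
    _ = Real.exp (-m) := by
        rw [← Real.exp_nat_mul, ← Real.exp_add]; congr 1; ring

/-- A small exponent: `n ^ slack d` is the share of the colors, up to the logarithm, that is left
to the second coloring. The constant `22` accommodates sets of up to `4 (P + 2)` vertices. -/
noncomputable def slack (d : ℕ) : ℝ := 1 / (22 * d ^ 2)

/-- The number of colors of the first coloring. -/
noncomputable def firstColors (P d n : ℕ) : ℕ := ⌈(n : ℝ) ^ ((P : ℝ) / d - slack d)⌉₊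

/-- The number of colors of the second coloring. -/
noncomputable def secondColors (K : ℝ) (d n : ℕ) : ℕ :=
  ⌈K * (n : ℝ) ^ slack d * Real.log n ^ (-(1 : ℝ) / d)⌉₊

/-- The number of critical sets of `j` vertices through one edge that the first coloring admits. -/
noncomputable def degreeBound (C : ℝ) (P d n j : ℕ) : ℕ :=
  ⌈9 * C * (n : ℝ) ^ (slack d * criticalDeficiency P d j)⌉₊

/-- The base of the exponential potential which controls the second coloring. -/
noncomputable def potentialBase (d n : ℕ) : ℝ := (n : ℝ) ^ (slack d / 4)

variable {P d n : ℕ} {C K : ℝ}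

lemma slack_pos (hd : 0 < d) : 0 < slack d := by
  unfold slack
  positivity

lemma slack_le_one_div (hd : 0 < d) : slack d ≤ 1 / d := by
  have hd1 : (1 : ℝ) ≤ d := by exact_mod_cast hd
  exact one_div_le_one_div_of_le (by positivity) (by nlinarith)

lemma slack_le_one (hd : 0 < d) : slack d ≤ 1 :=
  (slack_le_one_div hd).trans (div_le_one_of_le₀ (by exact_mod_cast hd) d.cast_nonneg)

lemma firstColors_le (hP : 1 ≤ P) (hd : 0 < d) (hn : 1 ≤ n) :
    (firstColors P d n : ℝ) ≤ 2 * (n : ℝ) ^ ((P : ℝ) / d - slack d) := by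
  have hexp : slack d ≤ (P : ℝ) / d := (slack_le_one_div hd).trans (by gcongr; exact_mod_cast hP)
  have hone := Real.one_le_rpow (Nat.one_le_cast.2 hn) (sub_nonneg.2 hexp)
  exact Nat.ceil_le_two_mul (by linarith)

lemma firstColors_pos (hn : 1 ≤ n) : 0 < firstColors P d n :=
  Nat.ceil_pos.2 (by positivity)

lemma inv_log_le_rpow (hlog : 1 ≤ Real.log n) {r : ℕ} (hd : 0 < d) (hr : r ≤ d) :
    (Real.log n)⁻¹ ≤ Real.log n ^ (-(1 : ℝ) / d * r) := by
  have hd' : (0 : ℝ) < d := by exact_mod_cast hd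
  rw [← Real.rpow_neg_one]
  refine Real.rpow_le_rpow_of_exponent_le hlog ?_
  rw [neg_div, neg_mul, neg_le_neg_iff, one_div_mul_eq_div, div_le_one hd']
  exact_mod_cast hr

/-- The exponent of `n` in the expected number of sets of `j` vertices through a given edge on
which the first coloring repeats too many colors. -/
lemma sub_mul_floor_add_one_le {j : ℕ} (hP : 1 ≤ P) (hd : 0 < d)
    (hj : j ≤ 4 * (P + 2)) :
    ((j - 2 : ℕ) : ℝ) - ((P : ℝ) / d - slack d) * (d * (j - 2) / P + 1 : ℕ) ≤
      -(1 / (2 * d)) := by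
  obtain ⟨i, hi⟩ : ∃ i, i = j - 2 := ⟨_, rfl⟩
  have hi10 : i ≤ 10 * P := by lia
  rw [← hi]
  set R := d * i / P
  have hd1 : (1 : ℝ) ≤ d := by exact_mod_cast hd
  have hlower : (d : ℝ) * i + 1 ≤ (R + 1) * P := by
    exact_mod_cast Nat.lt_mul_of_div_lt (Nat.lt_succ_self R) hP
  have hupper : (R : ℝ) ≤ 10 * d := by
    have : R ≤ 10 * d := Nat.div_le_of_le_mul (by nlinarith)
    exact_mod_cast this
  have hmain : (i : ℝ) + 1 / d ≤ (P : ℝ) / d * (R + 1) := by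
    rw [div_mul_eq_mul_div, le_div_iff₀ (by positivity), add_mul,
      one_div_mul_cancel (by positivity)]
    linarith
  have hslack : slack d * (R + 1) ≤ 1 / (2 * d) := by
    rw [slack, one_div_mul_eq_div, div_le_div_iff₀ (by positivity) (by positivity)]
    nlinarith
  have hhalf : 1 / (d : ℝ) = 1 / (2 * d) + 1 / (2 * d) := by field_simp; norm_num
  push_cast
  linarith

theorem eventually_sum_pow_mul_le_half (hP : 1 ≤ P) (hd : 0 < d) (hC : 0 ≤ C) :
    ∀ᶠ n : ℕ in atTop, ∑ j ∈ Icc 3 (4 * (P + 2)), (n : ℝ) ^ (j - 2) *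
      (C * (1 / (firstColors P d n : ℝ)) ^ (d * (j - 2) / P + 1)) ≤ 1 / 2 := by
  have hsmall := tendsto_natCast_atTop_atTop.eventually (eventually_mul_rpow_neg_le
    (c := 4 * (P + 2) * C) (s := 1 / (2 * d)) (b := 1 / 2) (by positivity) (by norm_num))
  filter_upwards [hsmall, eventually_ge_atTop 1] with n hn hn1
  have hn1' : (1 : ℝ) ≤ n := by exact_mod_cast hn1
  have hterm : ∀ j ∈ Icc 3 (4 * (P + 2)), (n : ℝ) ^ (j - 2) *
      (C * (1 / (firstColors P d n : ℝ)) ^ (d * (j - 2) / P + 1)) ≤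
        C * (n : ℝ) ^ (-(1 / (2 * d) : ℝ)) := fun j hj ↦ by
    rw [mul_left_comm]
    gcongr
    exact (pow_mul_one_div_pow_le hn1' (Nat.le_ceil _) _ _).trans
      (Real.rpow_le_rpow_of_exponent_le hn1' (sub_mul_floor_add_one_le hP hd (mem_Icc.1 hj).2))
  refine (sum_le_card_nsmul _ _ _ hterm).trans (le_trans ?_ hn)
  have hcard : ((Icc 3 (4 * (P + 2))).card : ℝ) ≤ 4 * (P + 2) := by
    rw [Nat.card_Icc]
    exact_mod_cast (by lia : 4 * (P + 2) + 1 - 3 ≤ 4 * (P + 2))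
  rw [nsmul_eq_mul, mul_assoc (4 * ((P : ℝ) + 2))]
  gcongr

lemma nine_mul_pow_mul_le_degreeBound (hP : 0 < P) (hd : 0 < d) (hC : 0 ≤ C) (hn : 1 ≤ n)
    (j : ℕ) : 9 * ((n ^ (j - 2) : ℕ) * (C * (1 / (firstColors P d n : ℝ)) ^
      criticalDeficiency P d j)) ≤ degreeBound C P d n j := by
  have hn1 : (1 : ℝ) ≤ n := by exact_mod_cast hn
  set r := criticalDeficiency P d j
  have hexp : ((j - 2 : ℕ) : ℝ) - ((P : ℝ) / d - slack d) * r ≤ slack d * r := by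
    have hle : (d : ℝ) * (j - 2 : ℕ) ≤ P * r := by exact_mod_cast le_mul_criticalDeficiency hP
    have hdiv : ((j - 2 : ℕ) : ℝ) ≤ (P : ℝ) / d * r := by
      rw [div_mul_eq_mul_div, le_div_iff₀ (by positivity)]
      linarith
    linarith
  calc 9 * ((n ^ (j - 2) : ℕ) * (C * (1 / (firstColors P d n : ℝ)) ^ r))
      = 9 * C * ((n : ℝ) ^ (j - 2) * (1 / (firstColors P d n : ℝ)) ^ r) := by push_cast; ring
    _ ≤ 9 * C * (n : ℝ) ^ (slack d * r) := by
        gcongr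
        exact (pow_mul_one_div_pow_le hn1 (Nat.le_ceil _) _ _).trans
          (Real.rpow_le_rpow_of_exponent_le hn1 hexp)
    _ ≤ degreeBound C P d n j := Nat.le_ceil _

lemma rpow_slack_le_degreeBound {j : ℕ} (hP : 0 < P) (hd : 0 < d) (hC : 1 ≤ C) (hn : 1 ≤ n)
    (hj : 3 ≤ j) : (n : ℝ) ^ slack d ≤ degreeBound C P d n j := by
  have hone : (1 : ℝ) ≤ criticalDeficiency P d j := by
    exact_mod_cast criticalDeficiency_pos hP hd hj
  calc (n : ℝ) ^ slack d ≤ (n : ℝ) ^ (slack d * criticalDeficiency P d j) :=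
        Real.rpow_le_rpow_of_exponent_le (by exact_mod_cast hn)
          (le_mul_of_one_le_right (slack_pos hd).le hone)
    _ ≤ 9 * C * (n : ℝ) ^ (slack d * criticalDeficiency P d j) :=
        le_mul_of_one_le_left (by positivity) (by linarith)
    _ ≤ degreeBound C P d n j := Nat.le_ceil _

theorem eventually_sq_mul_sum_choose_lt_one (hP : 0 < P) (hd : 0 < d) (hC : 1 ≤ C) :
    ∀ᶠ n : ℕ in atTop, (n : ℝ) ^ 2 * ∑ j ∈ Icc 3 (P + 2),
      ((n ^ (j - 2)).choose (degreeBound C P d n j) : ℝ) *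
        (C * (1 / (firstColors P d n : ℝ)) ^ criticalDeficiency P d j) ^ degreeBound C P d n j <
          1 := by
  have hlarge := tendsto_natCast_atTop_atTop.eventually (eventually_mul_rpow_le_exp
    (c := 2 * (P + 2)) (k := 2) (by positivity) (slack_pos hd) one_pos)
  filter_upwards [hlarge, eventually_ge_atTop 1] with n hn hn1
  rw [one_mul, Real.rpow_two] at hn
  have hterm : ∀ j ∈ Icc 3 (P + 2), ((n ^ (j - 2)).choose (degreeBound C P d n j) : ℝ) *
      (C * (1 / (firstColors P d n : ℝ)) ^ criticalDeficiency P d j) ^ degreeBound C P d n j ≤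
        Real.exp (-(n : ℝ) ^ slack d) := fun j hj ↦
    (choose_mul_pow_le_exp_neg (by positivity)
      (nine_mul_pow_mul_le_degreeBound hP hd (by linarith) hn1 j)).trans
      (Real.exp_le_exp.2 (neg_le_neg (rpow_slack_le_degreeBound hP hd hC hn1 (mem_Icc.1 hj).1)))
  have hcard : ((Icc 3 (P + 2)).card : ℝ) ≤ P + 2 := by
    rw [Nat.card_Icc]
    exact_mod_cast (by lia : P + 2 + 1 - 3 ≤ P + 2)
  calc _ ≤ (n : ℝ) ^ 2 * ((P + 2) * Real.exp (-(n : ℝ) ^ slack d)) := by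
        refine mul_le_mul_of_nonneg_left ((sum_le_card_nsmul _ _ _ hterm).trans ?_) (by positivity)
        rw [nsmul_eq_mul]
        gcongr
    _ = 1 / 2 * (2 * (P + 2) * (n : ℝ) ^ 2 * Real.exp (-(n : ℝ) ^ slack d)) := by ring
    _ ≤ 1 / 2 * (Real.exp ((n : ℝ) ^ slack d) * Real.exp (-(n : ℝ) ^ slack d)) := by gcongr
    _ < 1 := by rw [← Real.exp_add, add_neg_cancel, Real.exp_zero]; norm_num

lemma degreeBound_mul_one_div_pow_le {j : ℕ} (hP : 0 < P) (hd : 0 < d) (hC : 1 ≤ C) (hK : 1 ≤ K)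
    (hn : 1 ≤ n) (hlog : 1 ≤ Real.log n) (hj : j ∈ Icc 3 (P + 2)) :
    degreeBound C P d n j * (1 / (secondColors K d n : ℝ)) ^ criticalDeficiency P d j ≤
      18 * C * (Real.log n / K) := by
  obtain ⟨hj3, hjP⟩ := mem_Icc.1 hj
  have hn1 : (1 : ℝ) ≤ n := by exact_mod_cast hn
  have hn0 : (0 : ℝ) < n := by linarith
  have hlog0 : 0 < Real.log n := by linarith
  set r := criticalDeficiency P d j
  have hone : 1 ≤ (n : ℝ) ^ (slack d * r) :=
    Real.one_le_rpow hn1 (mul_nonneg (slack_pos hd).le r.cast_nonneg)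
  have hdegree : (degreeBound C P d n j : ℝ) ≤ 18 * C * (n : ℝ) ^ (slack d * r) := by
    refine (Nat.ceil_le_two_mul (by nlinarith)).trans_eq ?_
    ring
  have hcolors : K * (n : ℝ) ^ (slack d * r) * (Real.log n)⁻¹ ≤ (secondColors K d n : ℝ) ^ r := by
    refine le_trans ?_ (pow_le_pow_left₀ (by positivity) (Nat.le_ceil _) r)
    rw [mul_pow, mul_pow, ← Real.rpow_mul_natCast hn0.le, ← Real.rpow_mul_natCast hlog0.le]
    have hKr : K ≤ K ^ r := le_self_pow₀ hK (criticalDeficiency_pos hP hd hj3).ne'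
    have hlogr := inv_log_le_rpow hlog hd (criticalDeficiency_le hP hjP : r ≤ d)
    gcongr
  calc degreeBound C P d n j * (1 / (secondColors K d n : ℝ)) ^ r
      ≤ 18 * C * (n : ℝ) ^ (slack d * r) * (K * (n : ℝ) ^ (slack d * r) * (Real.log n)⁻¹)⁻¹ := by
        rw [one_div, inv_pow]
        gcongr
    _ = 18 * C * (Real.log n / K) := by field_simp

theorem sum_degreeBound_mul_one_div_pow_le (hP : 0 < P) (hd : 0 < d) (hC : 1 ≤ C) (hK : 1 ≤ K)
    (hn : 1 ≤ n) (hlog : 1 ≤ Real.log n) :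
    ∑ j ∈ Icc 3 (P + 2), degreeBound C P d n j *
        (1 / (secondColors K d n : ℝ)) ^ criticalDeficiency P d j ≤
      (P + 2) * (18 * C * (Real.log n / K)) := by
  refine (sum_le_card_nsmul _ _ _ fun j hj ↦
    degreeBound_mul_one_div_pow_le hP hd hC hK hn hlog hj).trans ?_
  rw [nsmul_eq_mul, Nat.card_Icc]
  gcongr
  exact_mod_cast (by lia : P + 2 + 1 - 3 ≤ P + 2)

lemma one_le_potentialBase (hd : 0 < d) (hn : 1 ≤ n) : 1 ≤ potentialBase d n :=
  Real.one_le_rpow (by exact_mod_cast hn) (by linarith [slack_pos hd])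

lemma eventually_sq_potentialBase_le (hd : 0 < d) (hK : 1 ≤ K) :
    ∀ᶠ n : ℕ in atTop, 32 * potentialBase d n ^ 2 ≤
      K * (n : ℝ) ^ slack d * Real.log n ^ (-(1 : ℝ) / d) := by
  filter_upwards [tendsto_natCast_atTop_atTop.eventually (eventually_mul_log_le_rpow
      (c := 32) (by norm_num) (half_pos (slack_pos hd))),
    tendsto_natCast_atTop_atTop.eventually eventually_one_le_log, eventually_ge_atTop 1]
    with n hn hlog hn1
  have hn0 : (0 : ℝ) < n := by exact_mod_cast hn1
  have hlog0 : 0 < Real.log n := by linarith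
  have hsq : potentialBase d n ^ 2 = (n : ℝ) ^ (slack d / 2) := by
    rw [potentialBase, ← Real.rpow_mul_natCast hn0.le]
    congr 1
    ring
  have hlogd := inv_log_le_rpow hlog hd (Nat.one_le_of_lt hd)
  rw [Nat.cast_one, mul_one] at hlogd
  calc 32 * potentialBase d n ^ 2
      ≤ (n : ℝ) ^ (slack d / 2) * (Real.log n)⁻¹ * (n : ℝ) ^ (slack d / 2) := by
        rw [hsq, ← div_eq_mul_inv]
        gcongr
        rwa [le_div_iff₀ hlog0]
    _ = 1 * (n : ℝ) ^ slack d * (Real.log n)⁻¹ := by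
        rw [mul_right_comm, ← Real.rpow_add hn0, add_halves, one_mul]
    _ ≤ _ := by gcongr

theorem eventually_potentialBase_le_secondColors (hd : 0 < d) (hK : 1 ≤ K) :
    ∀ᶠ n : ℕ in atTop, 16 * ⌈potentialBase d n⌉₊ * potentialBase d n ≤ secondColors K d n := by
  filter_upwards [eventually_sq_potentialBase_le hd hK, eventually_ge_atTop 1] with n hn hn1
  have hbase := one_le_potentialBase hd hn1
  calc 16 * ⌈potentialBase d n⌉₊ * potentialBase d n
      ≤ 16 * (2 * potentialBase d n) * potentialBase d n := by
        gcongr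
        exact Nat.ceil_le_two_mul (by linarith)
    _ = 32 * potentialBase d n ^ 2 := by ring
    _ ≤ secondColors K d n := hn.trans (Nat.le_ceil _)

lemma eventually_secondColors_le (hd : 0 < d) (hK : 1 ≤ K) :
    ∀ᶠ n : ℕ in atTop, (secondColors K d n : ℝ) ≤
      2 * (K * (n : ℝ) ^ slack d * Real.log n ^ (-(1 : ℝ) / d)) := by
  filter_upwards [eventually_sq_potentialBase_le hd hK, eventually_ge_atTop 1] with n hn hn1
  exact Nat.ceil_le_two_mul (by nlinarith [one_le_potentialBase hd hn1])

theorem eventually_two_mul_sq_le_exp (hd : 0 < d) :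
    ∀ᶠ n : ℕ in atTop, 2 * (n : ℝ) ^ 2 ≤ Real.exp (⌈potentialBase d n⌉₊ / 2) := by
  filter_upwards [tendsto_natCast_atTop_atTop.eventually (eventually_mul_rpow_le_exp (c := 2)
    (k := 2) (s := slack d / 4) two_pos (by linarith [slack_pos hd]) one_half_pos)] with n hn
  rw [Real.rpow_two] at hn
  refine hn.trans (Real.exp_le_exp.2 ?_)
  have : potentialBase d n ≤ ⌈potentialBase d n⌉₊ := Nat.le_ceil _
  unfold potentialBase at *
  linarith

lemma potentialBase_pow (hn : 1 ≤ n) (σ : ℕ) :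
    potentialBase d n ^ σ = Real.exp (σ * (slack d / 8 * Real.log n)) ^ 2 := by
  have hn0 : (0 : ℝ) < n := by exact_mod_cast hn
  rw [potentialBase, ← Real.rpow_mul_natCast hn0.le, Real.rpow_def_of_pos hn0,
    ← Real.exp_nat_mul]
  congr 1
  push_cast
  ring

theorem eventually_growth_le_potentialBase_pow (hd : 0 < d) (hK : 1 ≤ K) :
    ∀ᶠ n : ℕ in atTop, 2 * (n : ℝ) ^ 2 * secondColors K d n *
      Real.exp (⌈potentialBase d n⌉₊ * (slack d / 8 * Real.log n)) ≤
        potentialBase d n ^ ⌈potentialBase d n⌉₊ := by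
  have hs := slack_pos hd
  filter_upwards [eventually_secondColors_le hd hK, eventually_ge_atTop 1,
    tendsto_natCast_atTop_atTop.eventually eventually_one_le_log,
    tendsto_natCast_atTop_atTop.eventually (eventually_mul_rpow_le_exp (c := 4 * K) (k := 3)
      (s := slack d / 4) (b := slack d / 8) (by positivity) (by positivity) (by positivity))]
    with n hB hn1 hlog hn
  have hn1' : (1 : ℝ) ≤ n := by exact_mod_cast hn1
  have hσ : potentialBase d n ≤ ⌈potentialBase d n⌉₊ := Nat.le_ceil _
  have hcolors : (secondColors K d n : ℝ) ≤ 2 * (K * n * 1) := by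
    refine hB.trans ?_
    gcongr
    · exact Real.rpow_le_self_of_one_le hn1' (slack_le_one hd)
    · exact Real.rpow_le_one_of_one_le_of_nonpos hlog
        (div_nonpos_of_nonpos_of_nonneg (by norm_num) d.cast_nonneg)
  rw [potentialBase_pow hn1, sq (Real.exp _)]
  gcongr
  calc 2 * (n : ℝ) ^ 2 * secondColors K d n ≤ 2 * (n : ℝ) ^ 2 * (2 * (K * n * 1)) := by gcongr
    _ = 4 * K * (n : ℝ) ^ (3 : ℝ) := by
        rw [Real.rpow_ofNat]; ring
    _ ≤ Real.exp (slack d / 8 * potentialBase d n) := hn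
    _ ≤ Real.exp (⌈potentialBase d n⌉₊ * (slack d / 8 * Real.log n)) := by
        rw [Real.exp_le_exp, mul_comm]
        gcongr
        nlinarith

/-- The constant in the number of second colors, chosen so large that the expected number of
critical sets through an edge which stay unseparated is a small multiple of `log n`. -/
noncomputable def colorsConstant (P d : ℕ) : ℝ :=
  (P + 2) * (18 * patternBound (P + 2)) * (8 * 4 ^ ((P + 2) ^ 2 + 1) / slack d)

lemma one_le_colorsConstant (hd : 0 < d) : 1 ≤ colorsConstant P d := by
  have hs := slack_pos hd
  have hpattern := one_le_patternBound (P + 2)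
  have hpow : (1 : ℝ) ≤ 4 ^ ((P + 2) ^ 2 + 1) := one_le_pow₀ (by norm_num)
  refine one_le_mul_of_one_le_of_one_le ?_ ?_
  · nlinarith [P.cast_nonneg (α := ℝ)]
  · rw [one_le_div hs]
    linarith [slack_le_one hd]

lemma four_pow_mul_div_colorsConstant (hd : 0 < d) (L : ℝ) :
    4 ^ ((P + 2) ^ 2 + 1) * ((P + 2) * (18 * patternBound (P + 2) * (L / colorsConstant P d))) =
      slack d / 8 * L := by
  have hs := (slack_pos hd).ne'
  have hpattern := (patternBound_pos (P + 2)).ne'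
  rw [colorsConstant]
  field_simp

theorem eventually_genRamsey_le_mul {q : ℕ} (hP : 1 ≤ P) (hd : 3 * P < d)
    (hq : q + d = (P + 2).choose 2 + 1) :
    ∀ᶠ n : ℕ in atTop,
      genRamsey n (P + 2) q ≤ firstColors P d n * secondColors (colorsConstant P d) d n := by
  have hd0 : 0 < d := by lia
  have hC := one_le_patternBound (P + 2)
  have hK := one_le_colorsConstant (P := P) hd0
  filter_upwards [eventually_ge_atTop 1,
    tendsto_natCast_atTop_atTop.eventually eventually_one_le_log,
    eventually_sum_pow_mul_le_half hP hd0 (patternBound_pos (4 * (P + 2))).le,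
    eventually_sq_mul_sum_choose_lt_one hP hd0 hC, eventually_two_mul_sq_le_exp hd0,
    eventually_potentialBase_le_secondColors hd0 hK,
    eventually_growth_le_potentialBase_pow hd0 hK] with n hn hlog hsparse hfew hmass hσ hgrowth
  have hbase := one_le_potentialBase hd0 hn
  have : NeZero (firstColors P d n) := ⟨(firstColors_pos hn).ne'⟩
  have : NeZero (secondColors (colorsConstant P d) d n) := by
    refine ⟨Nat.cast_ne_zero (R := ℝ).1 (ne_of_gt (lt_of_lt_of_le ?_ hσ))⟩
    have := Nat.ceil_pos.2 (one_pos.trans_le hbase)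
    positivity
  refine genRamsey_le_mul hP hd hq hsparse hfew hbase
    (sum_degreeBound_mul_one_div_pow_le hP hd0 hC hK hn hlog) hσ hmass ?_
  rwa [mul_right_comm (4 ^ _), four_pow_mul_div_colorsConstant hd0, mul_comm _ (⌈_⌉₊ : ℝ)]

theorem eventually_genRamsey_le {q : ℕ} (hP : 1 ≤ P) (hd : 3 * P < d)
    (hq : q + d = (P + 2).choose 2 + 1) :
    ∀ᶠ n : ℕ in atTop, (genRamsey n (P + 2) q : ℝ) ≤
      4 * colorsConstant P d * (n : ℝ) ^ ((P : ℝ) / d) * Real.log n ^ (-(1 : ℝ) / d) := by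
  have hd0 : 0 < d := by lia
  filter_upwards [eventually_ge_atTop 1, eventually_genRamsey_le_mul hP hd hq,
    eventually_secondColors_le hd0 (one_le_colorsConstant (P := P) hd0)] with n hn hmul hsecond
  calc (genRamsey n (P + 2) q : ℝ)
      ≤ firstColors P d n * secondColors (colorsConstant P d) d n := by exact_mod_cast hmul
    _ ≤ 2 * (n : ℝ) ^ ((P : ℝ) / d - slack d) *
        (2 * (colorsConstant P d * (n : ℝ) ^ slack d * Real.log n ^ (-(1 : ℝ) / d))) := by
        gcongr
        exact firstColors_le hP hd0 hn
    _ = 4 * colorsConstant P d * ((n : ℝ) ^ ((P : ℝ) / d - slack d) * (n : ℝ) ^ slack d) *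
        Real.log n ^ (-(1 : ℝ) / d) := by ring
    _ = _ := by rw [← Real.rpow_add (by exact_mod_cast hn), sub_add_cancel]

end Asymptotics

theorem genRamsey_upper_bound_general (p q : ℕ) (hp : 3 ≤ p)
    (hq : q + 3 * p ≤ p.choose 2 + 6) :
    ∃ K : ℝ, 0 < K ∧ ∃ n₀ : ℕ, 2 ≤ n₀ ∧ ∀ n : ℕ, n₀ ≤ n →
      (genRamsey n p q : ℝ) ≤
        K * (n : ℝ) ^ (((p : ℝ) - 2) / ((p.choose 2 : ℝ) - (q : ℝ) + 1)) *
          Real.log n ^ (-(1 : ℝ) / ((p.choose 2 : ℝ) - (q : ℝ) + 1)) := by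
  obtain ⟨P, rfl⟩ : ∃ P, p = P + 2 := ⟨p - 2, by lia⟩
  obtain ⟨d, hd⟩ : ∃ d, q + d = (P + 2).choose 2 + 1 := ⟨(P + 2).choose 2 + 1 - q, by lia⟩
  have hdR : ((P + 2).choose 2 : ℝ) - q + 1 = d := by
    have : (q : ℝ) + d = (P + 2).choose 2 + 1 := by exact_mod_cast hd
    linarith
  rw [hdR, Nat.cast_add, Nat.cast_ofNat, add_sub_cancel_right]
  have hK : 1 ≤ colorsConstant P d := one_le_colorsConstant (by lia)
  obtain ⟨n₀, hn₀⟩ := Filter.eventually_atTop.1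
    (eventually_genRamsey_le (P := P) (by lia) (by lia) hd)
  exact ⟨4 * colorsConstant P d, by positivity, max n₀ 2, le_max_right _ _,
    fun n hn ↦ hn₀ n (le_of_max_le_left hn)⟩

/-- Theorem (main): for fixed `p ≥ 3` and `1 ≤ q ≤ (p² − 26p + 55)/4`,
`f(n,p,q) = O( n^{(p−2)/(C(p,2)−q+1)} · (log n)^{−1/(C(p,2)−q+1)} )`. -/
theorem genRamsey_upper_bound (p q : ℕ) (hp : 3 ≤ p) (hq1 : 1 ≤ q)
    (hq2 : (4 * q : ℤ) ≤ (p : ℤ) ^ 2 - 26 * p + 55) :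
    ∃ K : ℝ, 0 < K ∧ ∃ n₀ : ℕ, 2 ≤ n₀ ∧ ∀ n : ℕ, n₀ ≤ n →
      (genRamsey n p q : ℝ) ≤
        K * (n : ℝ) ^ (((p : ℝ) - 2) / ((p.choose 2 : ℝ) - (q : ℝ) + 1)) *
          Real.log n ^ (-(1 : ℝ) / ((p.choose 2 : ℝ) - (q : ℝ) + 1)) := by
  refine genRamsey_upper_bound_general p q hp ?_
  have hchoose := Nat.cast_choose_two ℚ p
  qify at hq2 hp ⊢
  nlinarith

end EG
end

section
/- For all fixed integers k ≥ 3 and s with (k² + 24k − 47)/4 ≤ s ≤ C(k,2) + 1, there exist a constant c > 0 and an integer n₀ ≥ 2 such that for all n ≥ n₀ one has F⁽²⁾(n; k, s) ≥ c · n^{(2s−k)/(s−1)} · (log n)^{1/(s−1)}. -/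
/-!
As soon as `k² / 4 < s`, the number `F²(n; k, s)` is quadratic in `n`: the balanced complete
bipartite graph on `n` vertices has `⌊n² / 4⌋` edges, while any `k` of its vertices induce a
bipartite graph and hence at most `k² / 4 < s` edges. On the other side, `log n ≤ n` bounds the
claimed growth rate by `n ^ ((2 * s - k + 1) / (s - 1))`, whose exponent is at most `2` once
`3 ≤ k`.
-/

namespace EG

section SparseGraphs

open Finset SimpleGraph

variable {n k s r : ℕ}

lemma card_edgeFinset_lt_F2 (G : SimpleGraph (Fin n)) [DecidableRel G.Adj]
    (hG : ∀ S : Finset (Fin n), #S = k → #(G.edgeFinset ∩ S.sym2) < s) :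
    #G.edgeFinset < F2 n k s := by
  -- Too large an edge count qualifies vacuously, so the infimum is not the junk `sInf ∅ = 0`.
  have hattained : F2 n k s ∈ {m | ∀ E : Finset (Sym2 (Fin n)), (∀ e ∈ E, ¬ e.IsDiag) →
      #E = m → ∃ S : Finset (Fin n), #S = k ∧ s ≤ #(E ∩ S.sym2)} :=
    Nat.sInf_mem ⟨Fintype.card (Sym2 (Fin n)) + 1, fun E _ hE => by
      have := card_le_univ E
      omega⟩
  by_contra! hle
  obtain ⟨E, hEG, hE⟩ := exists_subset_card_eq hle
  obtain ⟨S, hSk, hS⟩ := hattained E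
    (fun e he => G.not_isDiag_of_mem_edgeSet (mem_edgeFinset.1 (hEG he))) hE
  exact (hG S hSk).not_ge (hS.trans (card_le_card (inter_subset_inter_right hEG)))

lemma card_edgeFinset_inter_sym2_le_turanGraph {V : Type*} [Fintype V] [DecidableEq V]
    {G : SimpleGraph V} [DecidableRel G.Adj] (hG : G.CliqueFree (r + 1)) (S : Finset V) :
    #(G.edgeFinset ∩ S.sym2) ≤ #(turanGraph #S r).edgeFinset := by
  have hinduce : (G.induce (S : Set V)).CliqueFree (r + 1) :=
    hG.comap (Embedding.induce _).isContained
  rw [← filter_edgeFinset_toFinset_subset, card_filter_edgeFinset_toFinset_subset,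
    card_edgeFinset_turanGraph]
  simpa using hinduce.card_edgeFinset_le

lemma card_edgeFinset_turanGraph_lt_F2 (n : ℕ) (hr : 0 < r)
    (hs : #(turanGraph k r).edgeFinset < s) : #(turanGraph n r).edgeFinset < F2 n k s := by
  refine card_edgeFinset_lt_F2 _ fun S hS => ?_
  subst hS
  exact (card_edgeFinset_inter_sym2_le_turanGraph (turanGraph_cliqueFree hr) S).trans_lt hs

lemma card_edgeFinset_turanGraph_two (n : ℕ) : #(turanGraph n 2).edgeFinset = n ^ 2 / 4 := by
  rw [card_edgeFinset_turanGraph]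
  rcases Nat.mod_two_eq_zero_or_one n with hn | hn
  · simp [hn]
  · have hsq : n ^ 2 % 4 = 1 := by
      obtain ⟨m, rfl⟩ := Nat.odd_iff.2 hn
      ring_nf
      omega
    have hdiv : (n ^ 2 - 1) / 4 = n ^ 2 / 4 := by omega
    simpa [hn] using hdiv

lemma sq_lt_four_mul_F2 (n : ℕ) (hs : k ^ 2 < 4 * s) : n ^ 2 < 4 * F2 n k s := by
  have hturan := card_edgeFinset_turanGraph_lt_F2 (k := k) (s := s) n two_pos
    (by rw [card_edgeFinset_turanGraph_two]; omega)
  rw [card_edgeFinset_turanGraph_two] at hturan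
  omega

end SparseGraphs

lemma rpow_mul_log_rpow_le_rpow_add {x a b : ℝ} (hx : 1 ≤ x) (hb : 0 ≤ b) :
    x ^ a * Real.log x ^ b ≤ x ^ (a + b) := by
  have hx0 : 0 < x := one_pos.trans_le hx
  rw [Real.rpow_add hx0]
  gcongr
  · exact Real.log_nonneg hx
  · exact Real.log_le_self hx0.le

theorem F2_lower_bound_general {k s n : ℕ} (hk : 3 ≤ k) (hs : k ^ 2 < 4 * s) (hn : 1 ≤ n) :
    1 / 4 * (n : ℝ) ^ ((2 * (s : ℝ) - (k : ℝ)) / ((s : ℝ) - 1)) *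
      Real.log n ^ ((1 : ℝ) / ((s : ℝ) - 1)) < (F2 n k s : ℝ) := by
  have hn' : (1 : ℝ) ≤ n := by exact_mod_cast hn
  have hk' : (3 : ℝ) ≤ k := by exact_mod_cast hk
  have hs' : (0 : ℝ) < s - 1 := by
    have : (k : ℝ) ^ 2 < 4 * s := by exact_mod_cast hs
    nlinarith
  have hexp : (2 * (s : ℝ) - k) / (s - 1) + 1 / (s - 1) ≤ 2 := by
    rw [← add_div, div_le_iff₀ hs']
    linarith
  have hrate : (n : ℝ) ^ ((2 * (s : ℝ) - k) / (s - 1)) * Real.log n ^ (1 / ((s : ℝ) - 1)) <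
      4 * F2 n k s :=
    calc
      _ ≤ (n : ℝ) ^ ((2 * (s : ℝ) - k) / (s - 1) + 1 / (s - 1)) :=
        rpow_mul_log_rpow_le_rpow_add hn' (by positivity)
      _ ≤ (n : ℝ) ^ (2 : ℝ) := Real.rpow_le_rpow_of_exponent_le hn' hexp
      _ = (n : ℝ) ^ 2 := Real.rpow_two _
      _ < 4 * F2 n k s := by exact_mod_cast sq_lt_four_mul_F2 n hs
  linarith

/-- Corollary: for fixed `k ≥ 3` and `(k² + 24k − 47)/4 ≤ s ≤ C(k,2) + 1`,
`F²(n;k,s) = Ω( n^{(2s−k)/(s−1)} · (log n)^{1/(s−1)} )`. -/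
theorem F2_lower_bound (k s : ℕ) (hk : 3 ≤ k)
    (hs1 : ((k : ℤ) ^ 2 + 24 * k - 47) ≤ 4 * s) (hs2 : s ≤ k.choose 2 + 1) :
    ∃ c : ℝ, 0 < c ∧ ∃ n₀ : ℕ, 2 ≤ n₀ ∧ ∀ n : ℕ, n₀ ≤ n →
      c * (n : ℝ) ^ ((2 * (s : ℝ) - (k : ℝ)) / ((s : ℝ) - 1)) *
          Real.log n ^ ((1 : ℝ) / ((s : ℝ) - 1)) ≤ (F2 n k s : ℝ) := by
  have hs : k ^ 2 < 4 * s := by zify at hk ⊢; linarith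
  exact ⟨1 / 4, by norm_num, 2, le_rfl, fun n hn => (F2_lower_bound_general hk hs (by omega)).le⟩

end EG
end
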